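/- arXiv:0704.0588 — 3 statements merged into one kernel-verified Lean document; each statement's English description precedes it below -/
import Mathlib

section
/- Let p be a probability measure on a finite set Y. For δ > 0, define Δ(p;N,δ) as the set of sequences y ∈ Y^N with |ν_y(t) − p(t)| < δ for all t ∈ Y. Then for each fixed δ > 0, the limit as N → ∞ of (1/N) log #Δ(p;N,δ) exists and equals sup{S(q) : q a probability measure on Y with |q(t) − p(t)| < δ for all t ∈ Y}. -/
open Filter

lemma aux_prod_count {Y : Type*} [Fintype Y] [DecidableEq Y] {N : ℕ} (q : Y → ℝ) (y : Fin N → Y) :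
    ∏ j, q (y j) = ∏ t, q t ^ (Finset.univ.filter fun j => y j = t).card := by
  rw [← Finset.prod_fiberwise (s := Finset.univ) (g := y)]
  refine Finset.prod_congr rfl fun t _ => ?_
  rw [Finset.prod_congr rfl (g := fun _ => q t)]
  · simp
  · intro j hj
    simp at hj
    rw [hj]

lemma aux_total {Y : Type*} [Fintype Y] [DecidableEq Y] (N : ℕ) (q : Y → ℝ) (h1 : ∑ t, q t = 1) :
    ∑ y : Fin N → Y, ∏ j, q (y j) = 1 := by
  rw [← Fintype.piFinset_univ, Finset.sum_prod_piFinset Finset.univ (fun _ t => q t)]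
  simp [h1]

lemma aux_count_sum {Y : Type*} [Fintype Y] [DecidableEq Y] {N : ℕ} (y : Fin N → Y) :
    ∑ t, ((Finset.univ.filter fun j => y j = t).card : ℝ) = N := by
  have := Finset.card_eq_sum_card_fiberwise (s := (Finset.univ : Finset (Fin N))) (f := y)
    (t := Finset.univ) (by simp)
  rw [Finset.card_univ, Fintype.card_fin] at this
  exact_mod_cast this.symm

lemma aux_var {Y : Type*} [Fintype Y] [DecidableEq Y] (q g : Y → ℝ) (h1 : ∑ t, q t = 1)
    (hg : ∑ t, q t * g t = 0) (N : ℕ) :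
    ∑ y : Fin N → Y, (∏ j, q (y j)) * (∑ j, g (y j)) ^ 2 = N * ∑ t, q t * g t ^ 2 := by
  induction N with
  | zero => simp
  | succ N ih =>
    rw [← (Fin.consEquiv (fun _ => Y)).sum_comp, Fintype.sum_prod_type]
    simp only [Fin.consEquiv_apply, Fin.prod_univ_succ, Fin.sum_univ_succ, Fin.cons_zero,
      Fin.cons_succ]
    have : ∀ a : Y, ∑ y : Fin N → Y, (q a * ∏ j, q (y j)) * (g a + ∑ j, g (y j)) ^ 2
        = q a * g a ^ 2 + (q a * g a) * (2 * ∑ y : Fin N → Y, (∏ j, q (y j)) * (∑ j, g (y j)))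
          + q a * (N * ∑ t, q t * g t ^ 2) := by
      intro a
      rw [← ih]
      have h := aux_total N q h1
      calc _ = ∑ y : Fin N → Y, ((q a * g a ^ 2) * (∏ j, q (y j)) +
            (q a * g a) * (2 * ((∏ j, q (y j)) * (∑ j, g (y j)))) +
            q a * ((∏ j, q (y j)) * (∑ j, g (y j)) ^ 2)) :=
            Finset.sum_congr rfl fun y _ => by ring
        _ = _ := by
          simp only [Finset.sum_add_distrib, ← Finset.mul_sum]
          rw [h, mul_one]
    rw [Finset.sum_congr rfl fun a _ => this a]
    simp only [Finset.sum_add_distrib, ← Finset.sum_mul]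
    rw [hg, h1]
    push_cast
    ring

lemma aux_point_le {Y : Type*} [Fintype Y] [DecidableEq Y] {N : ℕ} (q : Y → ℝ)
    (h0 : ∀ t, 0 ≤ q t) (η : ℝ) (y : Fin N → Y)
    (hy : ∀ t, |((Finset.univ.filter fun j => y j = t).card : ℝ) - N * q t| ≤ N * η) :
    ∏ j, q (y j) ≤ Real.exp (N * (∑ t, q t * Real.log (q t) + η * ∑ t, |Real.log (q t)|)) := by
  rw [aux_prod_count, mul_add, ← mul_assoc, Finset.mul_sum, Finset.mul_sum,
    ← Finset.sum_add_distrib, Real.exp_sum]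
  refine Finset.prod_le_prod (fun t _ => pow_nonneg (h0 t) _) fun t _ => ?_
  rcases (h0 t).eq_or_lt with h | h
  · rw [← h]
    simp
    exact pow_le_one₀ le_rfl zero_le_one
  · rw [← Real.exp_log h, ← Real.exp_nat_mul, Real.exp_log h]
    apply Real.exp_le_exp.2
    have h2 := mul_le_mul_of_nonneg_right (hy t) (abs_nonneg (Real.log (q t)))
    rw [← abs_mul] at h2
    have h3 := le_abs_self ((((Finset.univ.filter fun j => y j = t).card : ℝ) - N * q t) *
      Real.log (q t))
    linarith

lemma aux_point_eq {Y : Type*} [Fintype Y] [DecidableEq Y] {N : ℕ} (hN : 0 < N) (c : Y → ℕ)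
    (y : Fin N → Y) (hy : ∀ t, (Finset.univ.filter fun j => y j = t).card = c t) :
    ∏ j, ((c (y j) : ℝ) / N) =
      Real.exp (N * ∑ t, (c t / N : ℝ) * Real.log (c t / N)) := by
  rw [aux_prod_count (fun t => (c t : ℝ) / N), Finset.mul_sum, Real.exp_sum]
  refine Finset.prod_congr rfl fun t _ => ?_
  rw [hy]
  have hN' : (0 : ℝ) < N := by exact_mod_cast hN
  rcases Nat.eq_zero_or_pos (c t) with h | h
  · simp [h]
  · have h' : (0 : ℝ) < c t := by exact_mod_cast h
    rw [← mul_assoc, mul_div_cancel₀ _ hN'.ne', Real.exp_nat_mul, Real.exp_log (by positivity)]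

lemma aux_class {Y : Type*} [Fintype Y] [DecidableEq Y] {N : ℕ} (hN : 0 < N) (y₀ : Fin N → Y)
    (A : Finset (Fin N → Y)) (c : Y → ℕ)
    (hc : ∑ t, (c t : ℝ) = N)
    (hA : ∀ y ∈ A, ∀ t, (Finset.univ.filter fun j => y j = t).card = c t) :
    (A.card : ℝ) ≤ Real.exp (N * -∑ t, (c t / N : ℝ) * Real.log (c t / N)) := by
  have hN' : (0 : ℝ) < N := by exact_mod_cast hN
  have h1 : ∑ t, (c t : ℝ) / N = 1 := by
    rw [← Finset.sum_div, hc, div_self hN'.ne']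
  have h2 := aux_total N (fun t => (c t : ℝ) / N) h1
  have h3 : ∑ y ∈ A, ∏ j, ((c (y j) : ℝ) / N) ≤ 1 := by
    rw [← h2]
    exact Finset.sum_le_sum_of_subset_of_nonneg (Finset.subset_univ _)
      fun y _ _ => Finset.prod_nonneg fun j _ => by positivity
  rw [Finset.sum_congr rfl fun y hy => aux_point_eq hN c y (hA y hy), Finset.sum_const,
    nsmul_eq_mul] at h3
  rw [mul_neg, Real.exp_neg]
  exact (le_div_iff₀ (Real.exp_pos _)).2 h3 |>.trans_eq (one_div _)

lemma aux_upper {Y : Type*} [Fintype Y] [DecidableEq Y] {N : ℕ} (hN : 0 < N)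
    (A : Finset (Fin N → Y)) (s : ℝ)
    (hs : ∀ y ∈ A, -∑ t, (((Finset.univ.filter fun j => y j = t).card : ℝ) / N) *
      Real.log (((Finset.univ.filter fun j => y j = t).card : ℝ) / N) ≤ s) :
    (A.card : ℝ) ≤ ((N : ℝ) + 1) ^ Fintype.card Y * Real.exp (N * s) := by
  let f : (Fin N → Y) → (Y → Fin (N + 1)) := fun y t =>
    ⟨(Finset.univ.filter fun j => y j = t).card,
      Nat.lt_succ_of_le ((Finset.card_le_univ _).trans (by simp))⟩
  have h := Finset.card_eq_sum_card_fiberwise (s := A) (f := f) (t := Finset.univ) (by simp)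
  rw [h]
  push_cast
  have hb : ∀ c ∈ (Finset.univ : Finset (Y → Fin (N + 1))),
      (((A.filter fun y => f y = c).card : ℕ) : ℝ) ≤ Real.exp (N * s) := by
    intro c _
    rcases (A.filter fun y => f y = c).eq_empty_or_nonempty with h | ⟨y, hy⟩
    · rw [h]; simp; positivity
    · have hmem : ∀ y ∈ (A.filter fun y => f y = c), ∀ t,
          (Finset.univ.filter fun j => y j = t).card = (c t : ℕ) := by
        intro y hy t
        rw [← (Finset.mem_filter.1 hy).2]
      have hA := (Finset.mem_filter.1 hy).1
      have hc := hmem y hy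
      have hsum := aux_count_sum y
      have hs' := hs y hA
      simp only [hc] at hsum hs'
      refine (aux_class hN y _ (fun t => (c t : ℕ)) hsum hmem).trans (Real.exp_le_exp.2 ?_)
      exact mul_le_mul_of_nonneg_left hs' (by positivity)
  refine (Finset.sum_le_sum hb).trans_eq ?_
  simp

lemma aux_lower {Y : Type*} [Fintype Y] [DecidableEq Y] {N : ℕ} (hN : 0 < N)
    (q : Y → ℝ) (h0 : ∀ t, 0 ≤ q t) (h1 : ∑ t, q t = 1) (η : ℝ) (hη : 0 < η)
    (hbig : 2 * (Fintype.card Y : ℝ) ≤ N * η ^ 2)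
    (A : Finset (Fin N → Y))
    (hA : ∀ y, (∀ t, |((Finset.univ.filter fun j => y j = t).card : ℝ) - N * q t| ≤ N * η)
      → y ∈ A) :
    1 / 2 * Real.exp (N * (-∑ t, q t * Real.log (q t) - η * ∑ t, |Real.log (q t)|)) ≤ A.card := by
  have hN' : (0 : ℝ) < N := by exact_mod_cast hN
  have hQ : ∀ y : Fin N → Y, 0 ≤ ∏ j, q (y j) := fun y => Finset.prod_nonneg fun j _ => h0 _
  have hcount : ∀ (y : Fin N → Y) t, ∑ j, ((if y j = t then (1 : ℝ) else 0) - q t) =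
      ((Finset.univ.filter fun j => y j = t).card : ℝ) - N * q t := by
    intro y t
    simp [Finset.sum_sub_distrib]
  have hv : ∀ t, ∑ y : Fin N → Y, (∏ j, q (y j)) *
      (((Finset.univ.filter fun j => y j = t).card : ℝ) - N * q t) ^ 2 ≤ N := by
    intro t
    have hq1 : q t ≤ 1 := by
      rw [← h1]; exact Finset.single_le_sum (fun i _ => h0 i) (Finset.mem_univ t)
    have := aux_var q (fun a => (if a = t then (1 : ℝ) else 0) - q t) h1
      (by simp [mul_sub, Finset.sum_sub_distrib, ← Finset.sum_mul, h1]) N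
    simp only [hcount] at this
    rw [this]
    have : ∑ a, q a * ((if a = t then (1 : ℝ) else 0) - q t) ^ 2 ≤ ∑ a, q a := by
      refine Finset.sum_le_sum fun a _ => mul_le_of_le_one_right (h0 a) ?_
      have := h0 t
      split_ifs <;> nlinarith
    rw [h1] at this
    nlinarith
  let T : Finset (Fin N → Y) := Finset.univ.filter fun y =>
    ∀ t, |((Finset.univ.filter fun j => y j = t).card : ℝ) - N * q t| ≤ N * η
  have hbad : ∑ y ∈ Tᶜ, ∏ j, q (y j) ≤ 1 / 2 := by
    have hpos : 0 < (N * η) ^ 2 := by positivity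
    have : (N * η) ^ 2 * ∑ y ∈ Tᶜ, ∏ j, q (y j) ≤ Fintype.card Y * N := by
      calc (N * η) ^ 2 * ∑ y ∈ Tᶜ, ∏ j, q (y j)
          ≤ ∑ y ∈ Tᶜ, (∏ j, q (y j)) *
            ∑ t, (((Finset.univ.filter fun j => y j = t).card : ℝ) - N * q t) ^ 2 := by
            rw [Finset.mul_sum]
            refine Finset.sum_le_sum fun y hy => ?_
            rw [mul_comm]
            refine mul_le_mul_of_nonneg_left ?_ (hQ y)
            simp only [T, Finset.mem_compl, Finset.mem_filter, Finset.mem_univ, true_and,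
              not_forall, not_le] at hy
            obtain ⟨t, ht⟩ := hy
            refine le_trans ?_ (Finset.single_le_sum (f := fun t =>
              (((Finset.univ.filter fun j => y j = t).card : ℝ) - N * q t) ^ 2)
              (fun i _ => sq_nonneg _) (Finset.mem_univ t))
            rw [← sq_abs (_ - _)]
            exact pow_le_pow_left₀ (by positivity) ht.le 2
        _ ≤ ∑ y : Fin N → Y, (∏ j, q (y j)) *
            ∑ t, (((Finset.univ.filter fun j => y j = t).card : ℝ) - N * q t) ^ 2 :=
            Finset.sum_le_sum_of_subset_of_nonneg (Finset.subset_univ _) fun y _ _ =>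
              mul_nonneg (hQ y) (Finset.sum_nonneg fun _ _ => sq_nonneg _)
        _ = ∑ t, ∑ y : Fin N → Y, (∏ j, q (y j)) *
            (((Finset.univ.filter fun j => y j = t).card : ℝ) - N * q t) ^ 2 := by
            simp only [Finset.mul_sum]
            rw [Finset.sum_comm]
        _ ≤ ∑ t : Y, (N : ℝ) := Finset.sum_le_sum fun t _ => hv t
        _ = _ := by simp
    by_contra hcon
    push Not at hcon
    have h5 := mul_lt_mul_of_pos_left hcon hpos
    nlinarith
  have hgood : 1 / 2 ≤ ∑ y ∈ T, ∏ j, q (y j) := by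
    have := Finset.sum_add_sum_compl T (fun y => ∏ j, q (y j))
    rw [aux_total N q h1] at this
    linarith
  have hle : ∑ y ∈ T, ∏ j, q (y j) ≤ T.card *
      Real.exp (N * (∑ t, q t * Real.log (q t) + η * ∑ t, |Real.log (q t)|)) := by
    rw [← nsmul_eq_mul]
    exact Finset.sum_le_card_nsmul _ _ _ fun y hy =>
      aux_point_le q h0 η y (Finset.mem_filter.1 hy).2
  have hTA : (T.card : ℝ) ≤ A.card := by
    exact_mod_cast Finset.card_le_card fun y hy => hA y (Finset.mem_filter.1 hy).2
  have he : Real.exp (N * (-∑ t, q t * Real.log (q t) - η * ∑ t, |Real.log (q t)|)) =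
      (Real.exp (N * (∑ t, q t * Real.log (q t) + η * ∑ t, |Real.log (q t)|)))⁻¹ := by
    rw [← Real.exp_neg]; congr 1; ring
  rw [he, ← div_eq_mul_inv, div_le_iff₀ (Real.exp_pos _)]
  exact (hgood.trans hle).trans (mul_le_mul_of_nonneg_right hTA (Real.exp_pos _).le)


open Filter

/-- For fixed `δ > 0`, `(1/N) log #Δ(p;N,δ)` converges as `N → ∞` to the
supremum of the Shannon entropies of probability measures `q` on `Y` with
`|q(t) - p(t)| < δ` for all `t`. -/
theorem stmt2 {Y : Type*} [Fintype Y] [DecidableEq Y]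
    (p : Y → ℝ) (hp0 : ∀ t, 0 ≤ p t) (hp1 : ∑ t, p t = 1)
    (δ : ℝ) (hδ : 0 < δ) :
    Tendsto
      (fun N : ℕ =>
        Real.log (Nat.card {y : Fin N → Y // ∀ t : Y,
          |((Finset.univ.filter fun j => y j = t).card : ℝ) / N - p t| < δ}) / N)
      atTop
      (nhds (sSup {s : ℝ | ∃ q : Y → ℝ, (∀ t, 0 ≤ q t) ∧ (∑ t, q t = 1) ∧
        (∀ t, |q t - p t| < δ) ∧ s = -∑ t, q t * Real.log (q t)})) := by
  set E : Set ℝ := {s : ℝ | ∃ q : Y → ℝ, (∀ t, 0 ≤ q t) ∧ (∑ t, q t = 1) ∧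
        (∀ t, |q t - p t| < δ) ∧ s = -∑ t, q t * Real.log (q t)} with hE
  have hne : E.Nonempty := ⟨_, p, hp0, hp1, fun t => by simpa using hδ, rfl⟩
  have hbdd : BddAbove E := by
    refine ⟨∑ t : Y, 1, ?_⟩
    rintro s ⟨q, h0, h1, -, rfl⟩
    rw [← Finset.sum_neg_distrib]
    refine Finset.sum_le_sum fun t _ => ?_
    rcases (h0 t).eq_or_lt with h | h
    · simp [← h]
    · have := mul_le_mul_of_nonneg_left (Real.one_sub_inv_le_log_of_pos h) h.le
      rw [mul_sub, mul_inv_cancel₀ h.ne'] at this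
      linarith
  let A : (N : ℕ) → Finset (Fin N → Y) := fun N => Finset.univ.filter fun y => ∀ t : Y,
    |((Finset.univ.filter fun j => y j = t).card : ℝ) / N - p t| < δ
  have hcard : ∀ N : ℕ, Nat.card {y : Fin N → Y // ∀ t : Y,
      |((Finset.univ.filter fun j => y j = t).card : ℝ) / N - p t| < δ} = (A N).card := by
    intro N
    rw [Nat.card_eq_fintype_card, Fintype.card_subtype]
  simp only [hcard]
  -- lower bound
  have hlow : ∀ a < sSup E, ∀ᶠ N : ℕ in atTop, a < Real.log (A N).card / N := by
    intro a ha
    obtain ⟨_, ⟨q, h0, h1, hq, rfl⟩, haq⟩ := exists_lt_of_lt_csSup hne ha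
    set S := -∑ t, q t * Real.log (q t) with hS
    set C := ∑ t, |Real.log (q t)| with hC
    have hC0 : 0 ≤ C := Finset.sum_nonneg fun _ _ => abs_nonneg _
    have hev : ∀ᶠ η : ℝ in nhdsWithin 0 (Set.Ioi 0), 0 < η ∧ (∀ t, η + |q t - p t| < δ) ∧
        a < S - η * C := by
      refine Filter.Eventually.and self_mem_nhdsWithin (Filter.Eventually.and ?_ ?_)
      · refine eventually_all.2 fun t => nhdsWithin_le_nhds ?_
        exact ContinuousAt.eventually_lt (by fun_prop) (by fun_prop) (by simpa using hq t)
      · apply nhdsWithin_le_nhds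
        exact ContinuousAt.eventually_lt (by fun_prop) (by fun_prop) (by simpa using haq)
    obtain ⟨η, hη, hηδ, hηa⟩ := hev.exists
    have e1 : ∀ᶠ N : ℕ in atTop, 2 * (Fintype.card Y : ℝ) / η ^ 2 ≤ N :=
      tendsto_natCast_atTop_atTop.eventually_ge_atTop _
    have e2 : ∀ᶠ N : ℕ in atTop, Real.log 2 / (S - η * C - a) < N :=
      tendsto_natCast_atTop_atTop.eventually_gt_atTop _
    filter_upwards [e1, e2, eventually_gt_atTop 0] with N hN1 hN2 hN
    have hN' : (0 : ℝ) < N := by exact_mod_cast hN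
    have hl := aux_lower hN q h0 h1 η hη ((div_le_iff₀ (by positivity)).1 hN1) (A N) (by
      intro y hy
      simp only [A, Finset.mem_filter, Finset.mem_univ, true_and]
      intro t
      refine lt_of_le_of_lt ?_ (hηδ t)
      have : |((Finset.univ.filter fun j => y j = t).card : ℝ) / N - q t| ≤ η := by
        rw [div_sub' hN'.ne', abs_div, abs_of_pos hN', div_le_iff₀ hN', mul_comm η]
        exact hy t
      have h3 := abs_sub_le (((Finset.univ.filter fun j => y j = t).card : ℝ) / N) (q t) (p t)
      linarith)
    have hl2 := Real.log_le_log (by positivity) hl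
    rw [Real.log_mul (by norm_num) (Real.exp_pos _).ne', Real.log_exp, one_div,
      Real.log_inv] at hl2
    rw [lt_div_iff₀ hN']
    rw [div_lt_iff₀ (by linarith)] at hN2
    refine lt_of_lt_of_le ?_ hl2
    rw [← hS, ← hC]
    linarith
  refine tendsto_order.2 ⟨hlow, fun a ha => ?_⟩
  have hlim : Tendsto (fun N : ℕ => (Fintype.card Y : ℝ) * (Real.log ((N : ℝ) + 1) / N))
      atTop (nhds 0) := by
    have h1 : Tendsto (fun x : ℝ => Real.log x ^ 1 / (1 * x + (-1))) atTop (nhds 0) :=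
      Real.tendsto_pow_log_div_mul_add_atTop 1 (-1) 1 one_ne_zero
    have h2 := h1.comp (tendsto_atTop_add_const_right atTop (1 : ℝ)
      (tendsto_natCast_atTop_atTop (R := ℝ)))
    have h3 := h2.const_mul (Fintype.card Y : ℝ)
    simpa [Function.comp_def] using h3
  have hlim' := hlim.add_const (sSup E)
  rw [zero_add] at hlim'
  filter_upwards [hlim'.eventually_lt_const ha, eventually_gt_atTop 0,
    hlow (sSup E - 1) (by linarith)] with N hN1 hN _
  have hN' : (0 : ℝ) < N := by exact_mod_cast hN
  refine lt_of_le_of_lt ?_ hN1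
  rcases (A N).eq_empty_or_nonempty with h | h
  · rw [h]
    simp only [Finset.card_empty, Nat.cast_zero, Real.log_zero, zero_div]
    have hs0 : 0 ≤ sSup E := by
      refine le_trans ?_ (le_csSup hbdd ⟨p, hp0, hp1, fun t => by simpa using hδ, rfl⟩)
      rw [neg_nonneg]
      refine Finset.sum_nonpos fun t _ => mul_nonpos_of_nonneg_of_nonpos (hp0 t) ?_
      refine Real.log_nonpos (hp0 t) ?_
      rw [← hp1]; exact Finset.single_le_sum (fun i _ => hp0 i) (Finset.mem_univ t)
    have := Real.log_nonneg (x := (N : ℝ) + 1) (by linarith)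
    positivity
  · have hu := aux_upper hN (A N) (sSup E) (by
      intro y hy
      refine le_csSup hbdd ⟨_, fun t => by positivity, ?_, (Finset.mem_filter.1 hy).2, rfl⟩
      rw [← Finset.sum_div, aux_count_sum, div_self hN'.ne'])
    have hpos : (0 : ℝ) < (A N).card := by exact_mod_cast h.card_pos
    have hl := Real.log_le_log hpos hu
    rw [Real.log_mul (by positivity) (Real.exp_pos _).ne', Real.log_exp, Real.log_pow] at hl
    rw [div_le_iff₀ hN', add_mul, mul_assoc, div_mul_cancel₀ _ hN'.ne']
    linarith
end

section
/- Let X_1,...,X_n be bounded real random variables and R ≥ max_i ‖X_i‖_∞. Then H(X_1,...,X_n) ≤ ∑_{i=1}^n H(X_i) − Ī_sym(X_1,...,X_n), where Ī_sym is the upper mutual information defined via the liminf over N of the normalized log-volumes of permutation micro-states. -/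
open MeasureTheory Filter
open scoped Classical ENNReal

/-- Normalized coordinate sum `κ_N(x) = N⁻¹ ∑_j x_j`. -/
noncomputable def kappa {N : ℕ} (x : Fin N → ℝ) : ℝ := (∑ j, x j) / N

/-- The micro-state set `Δ_R(X₁,…,Xₙ;N,m,δ)`: `n`-tuples of vectors in
`[-R,R]^N` whose normalized mixed moments up to order `m` approximate the
joint moments of `(X₁,…,Xₙ)` within `δ`. -/
noncomputable def DeltaR {Ω : Type*} [MeasurableSpace Ω] (μ : Measure Ω)
    {n : ℕ} (X : Fin n → Ω → ℝ) (R : ℝ) (N m : ℕ) (δ : ℝ) :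
    Set (Fin n → Fin N → ℝ) :=
  {x | (∀ i j, |x i j| ≤ R) ∧
    ∀ k : ℕ, 1 ≤ k → k ≤ m → ∀ idx : Fin k → Fin n,
      |kappa (fun j => ∏ l, x (idx l) j) - ∫ ω, ∏ l, X (idx l) ω ∂μ| < δ}

/-- The permutation micro-state set `Δ_{sym,R}(X₁,…,Xₙ;N,m,δ) ⊆ S_N^n`:
tuples `(σ₁,…,σₙ)` such that `(σ₁(x₁),…,σₙ(xₙ)) ∈ Δ_R` for some nondecreasing
`x₁,…,xₙ ∈ ℝ^N_≤`. -/
noncomputable def DeltaSymR {Ω : Type*} [MeasurableSpace Ω] (μ : Measure Ω)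
    {n : ℕ} (X : Fin n → Ω → ℝ) (R : ℝ) (N m : ℕ) (δ : ℝ) :
    Set (Fin n → Equiv.Perm (Fin N)) :=
  {σ | ∃ x : Fin n → Fin N → ℝ, (∀ i, Monotone (x i)) ∧
    (fun i j => x i ((σ i)⁻¹ j)) ∈ DeltaR μ X R N m δ}

/-- `(1/N) log γ_{S_N}^{⊗n}(Δ_{sym,R}(X₁,…,Xₙ;N,m,δ))`, the normalized log of
the uniform probability of the permutation micro-states. -/
noncomputable def symQ {Ω : Type*} [MeasurableSpace Ω] (μ : Measure Ω)
    {n : ℕ} (X : Fin n → Ω → ℝ) (R : ℝ) (N m : ℕ) (δ : ℝ) : ℝ :=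
  Real.log ((Nat.card (DeltaSymR μ X R N m δ) : ℝ) / (N.factorial : ℝ) ^ n) / N

/-- `(1/N) log λ_N^{⊗n}(Δ_R(X₁,…,Xₙ;N,m,δ))`, the normalized log-volume of the
micro-states. -/
noncomputable def volQ {Ω : Type*} [MeasurableSpace Ω] (μ : Measure Ω)
    {n : ℕ} (X : Fin n → Ω → ℝ) (R : ℝ) (N m : ℕ) (δ : ℝ) : ℝ :=
  Real.log (volume (DeltaR μ X R N m δ)).toReal / N

/-- The mutual information `I_sym`, via `limsup` in `N` and the limit
(= infimum, by monotonicity) over `m → ∞`, `δ → 0+`. -/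
noncomputable def Isym {Ω : Type*} [MeasurableSpace Ω] (μ : Measure Ω)
    {n : ℕ} (X : Fin n → Ω → ℝ) (R : ℝ) : EReal :=
  -(⨅ (m : ℕ) (δ : ℝ) (_ : 0 < δ),
      Filter.limsup (fun N : ℕ => ((symQ μ X R N m δ : ℝ) : EReal)) atTop)

/-- The upper mutual information `Ī_sym`, via `liminf` in `N`. -/
noncomputable def IsymUpper {Ω : Type*} [MeasurableSpace Ω] (μ : Measure Ω)
    {n : ℕ} (X : Fin n → Ω → ℝ) (R : ℝ) : EReal :=
  -(⨅ (m : ℕ) (δ : ℝ) (_ : 0 < δ),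
      Filter.liminf (fun N : ℕ => ((symQ μ X R N m δ : ℝ) : EReal)) atTop)

/-- Boltzmann–Gibbs (differential) entropy of `μ` with respect to a reference
measure `vol`, with value `⊥` (i.e. `-∞`) when `μ` has no density. -/
noncomputable def diffEntropy {E : Type*} [MeasurableSpace E] (vol μ : Measure E) : EReal :=
  if μ ≪ vol then
    ((∫⁻ x, ENNReal.ofReal (Real.negMulLog (μ.rnDeriv vol x).toReal) ∂vol : ℝ≥0∞) : EReal)
      - ((∫⁻ x, ENNReal.ofReal (-(Real.negMulLog (μ.rnDeriv vol x).toReal)) ∂vol : ℝ≥0∞) : EReal)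
  else ⊥

/-- Lemma 1.2 of the paper (assumed): the Boltzmann–Gibbs entropy is the
asymptotic normalized log-volume of the micro-state sets `Δ_R`, the limit in
`N` existing. -/
def MicrostateVolumeFormula {Ω : Type*} [MeasurableSpace Ω] (μ : Measure Ω)
    {n : ℕ} (X : Fin n → Ω → ℝ) (R : ℝ) : Prop :=
  diffEntropy volume (Measure.map (fun ω (i : Fin n) => X i ω) μ)
      = ⨅ (m : ℕ) (δ : ℝ) (_ : 0 < δ),
          Filter.limsup (fun N : ℕ => ((volQ μ X R N m δ : ℝ) : EReal)) atTop ∧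
  diffEntropy volume (Measure.map (fun ω (i : Fin n) => X i ω) μ)
      = ⨅ (m : ℕ) (δ : ℝ) (_ : 0 < δ),
          Filter.liminf (fun N : ℕ => ((volQ μ X R N m δ : ℝ) : EReal)) atTop

lemma aux_kappa_cont {N n k : ℕ} (idx : Fin k → Fin n) :
    Continuous (fun x : Fin n → Fin N → ℝ => kappa (fun j => ∏ l, x (idx l) j)) := by
  unfold kappa
  fun_prop

lemma aux_meas {Ω : Type*} [MeasurableSpace Ω] (μ : Measure Ω)
    {n : ℕ} (X : Fin n → Ω → ℝ) (R : ℝ) (N m : ℕ) (δ : ℝ) :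
    MeasurableSet (DeltaR μ X R N m δ) := by
  unfold DeltaR
  refine MeasurableSet.inter (s₁ := {x : Fin n → Fin N → ℝ | ∀ i j, |x i j| ≤ R})
    (s₂ := {x : Fin n → Fin N → ℝ | ∀ k : ℕ, 1 ≤ k → k ≤ m → ∀ idx : Fin k → Fin n,
      |kappa (fun j => ∏ l, x (idx l) j) - ∫ ω, ∏ l, X (idx l) ω ∂μ| < δ}) ?_ ?_
  · refine IsClosed.measurableSet ?_
    simp only [Set.ofPred_forall]
    exact isClosed_iInter fun i => isClosed_iInter fun j =>
      isClosed_le (by fun_prop) continuous_const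
  · simp only [Set.ofPred_forall]
    refine MeasurableSet.iInter fun k => MeasurableSet.iInter fun _ => MeasurableSet.iInter fun _ =>
      MeasurableSet.iInter fun idx => IsOpen.measurableSet ?_
    exact isOpen_lt ((aux_kappa_cont idx).sub continuous_const).abs continuous_const

lemma aux_subset_cube {Ω : Type*} [MeasurableSpace Ω] (μ : Measure Ω)
    {n : ℕ} (X : Fin n → Ω → ℝ) (R : ℝ) (N m : ℕ) (δ : ℝ) :
    DeltaR μ X R N m δ ⊆ Set.Icc (fun _ _ => -R) (fun _ _ => R) := by
  intro x hx
  exact ⟨fun i j => (abs_le.1 (hx.1 i j)).1, fun i j => (abs_le.1 (hx.1 i j)).2⟩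

lemma aux_vol_lt_top {Ω : Type*} [MeasurableSpace Ω] (μ : Measure Ω)
    {n : ℕ} (X : Fin n → Ω → ℝ) (R : ℝ) (N m : ℕ) (δ : ℝ) :
    volume (DeltaR μ X R N m δ) < ⊤ :=
  (measure_mono (aux_subset_cube μ X R N m δ)).trans_lt isCompact_Icc.measure_lt_top

lemma aux_vol_le {Ω : Type*} [MeasurableSpace Ω] (μ : Measure Ω)
    (X : Fin 1 → Ω → ℝ) (R : ℝ) (hR : 0 < R) (N m : ℕ) (δ : ℝ) :
    (volume (DeltaR μ X R N m δ)).toReal ≤ (2 * R) ^ N := by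
  have h := measure_mono (μ := volume) (aux_subset_cube μ X R N m δ)
  have h2 : volume (Set.Icc (fun (_ : Fin 1) (_ : Fin N) => -R) (fun _ _ => R))
      = ENNReal.ofReal ((2 * R) ^ N) := by
    rw [← Set.pi_univ_Icc, volume_pi_pi]
    simp only [← Set.pi_univ_Icc, volume_pi_pi, Real.volume_Icc]
    simp [ENNReal.ofReal_pow (by positivity : 0 ≤ R + R), two_mul]
  rw [h2] at h
  exact ENNReal.toReal_le_of_le_ofReal (by positivity) h

lemma aux_mono {Ω : Type*} [MeasurableSpace Ω] (μ : Measure Ω)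
    {n : ℕ} (X : Fin n → Ω → ℝ) (R : ℝ) (N : ℕ) {m m' : ℕ} {δ δ' : ℝ} (hm : m ≤ m')
    (hδ : δ' ≤ δ) : DeltaR μ X R N m' δ' ⊆ DeltaR μ X R N m δ := by
  intro x hx
  exact ⟨hx.1, fun k h1 h2 idx => (hx.2 k h1 (h2.trans hm) idx).trans_le hδ⟩

lemma aux_nonempty {Ω : Type*} [MeasurableSpace Ω] (μ : Measure Ω) [IsProbabilityMeasure μ]
    {n : ℕ} (X : Fin n → Ω → ℝ) (hmeas : ∀ i, Measurable (X i)) (R : ℝ)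
    (hbdd : ∀ i, ∀ᵐ ω ∂μ, |X i ω| ≤ R) (m : ℕ) (δ : ℝ) (hδ : 0 < δ) :
    ∀ᶠ N in atTop, (DeltaR μ X R N m δ).Nonempty := by
  let P : Measure (ℕ → Ω) := Measure.infinitePi (fun _ => μ)
  have hb : ∀ᵐ ω ∂P, ∀ i j, |X i (ω j)| ≤ R := by
    rw [ae_all_iff]; intro i
    rw [ae_all_iff]; intro j
    exact (measurePreserving_eval_infinitePi (fun _ : ℕ => μ) j).quasiMeasurePreserving.ae (hbdd i)
  have hl : ∀ᵐ ω ∂P, ∀ (k : Fin (m + 1)) (idx : Fin k → Fin n),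
      Tendsto (fun N : ℕ => (∑ j ∈ Finset.range N, ∏ l, X (idx l) (ω j)) / N) atTop
        (nhds (∫ ω, ∏ l, X (idx l) ω ∂μ)) := by
    rw [ae_all_iff]; intro k
    rw [ae_all_iff]; intro idx
    have hF : Measurable (fun ω => ∏ l, X (idx l) ω) :=
      Finset.measurable_prod _ fun l _ => hmeas _
    have hFi : Integrable (fun ω => ∏ l, X (idx l) ω) μ := by
      refine Integrable.of_bound hF.aestronglyMeasurable (R ^ (k : ℕ)) ?_
      filter_upwards [ae_all_iff.2 hbdd] with ω hω
      rw [Real.norm_eq_abs, Finset.abs_prod]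
      calc ∏ l, |X (idx l) ω| ≤ ∏ l : Fin k, R :=
            Finset.prod_le_prod (fun _ _ => abs_nonneg _) (fun l _ => hω _)
        _ = R ^ (k : ℕ) := by simp
    have hmp := fun j => measurePreserving_eval_infinitePi (fun _ : ℕ => μ) j
    have hind : ProbabilityTheory.iIndepFun (fun (j : ℕ) (ω : ℕ → Ω) => ∏ l, X (idx l) (ω j)) P :=
      ProbabilityTheory.iIndepFun_infinitePi (P := fun _ : ℕ => μ)
        (X := fun _ ω => ∏ l, X (idx l) ω) (fun _ => hF)
    have hid : ∀ j, (Measure.map (fun ω : ℕ → Ω => ∏ l, X (idx l) (ω j)) P)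
        = Measure.map (fun ω => ∏ l, X (idx l) ω) μ := by
      intro j
      rw [← (hmp j).map_eq, Measure.map_map hF (by fun_prop)]; rfl
    have := ProbabilityTheory.strong_law_ae_real
      (fun (j : ℕ) (ω : ℕ → Ω) => ∏ l, X (idx l) (ω j)) (μ := P)
      ((hmp 0).integrable_comp_of_integrable hFi) (fun i j hij => hind.indepFun hij)
      (fun j => ⟨(hF.comp (measurable_pi_apply j)).aemeasurable,
        (hF.comp (measurable_pi_apply 0)).aemeasurable, by rw [hid, hid]⟩)
    have he : ∫ ω, ∏ l, X (idx l) (ω 0) ∂P = ∫ ω, ∏ l, X (idx l) ω ∂μ := by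
      have := integral_map (μ := P) (φ := fun ω : ℕ → Ω => ω 0) (measurable_pi_apply 0).aemeasurable
        (f := fun ω => ∏ l, X (idx l) ω)
        (by rw [(hmp 0).map_eq]; exact hF.aestronglyMeasurable)
      rw [← this, (hmp 0).map_eq]
    rwa [he] at this
  obtain ⟨ω, h1, h2⟩ := (hb.and hl).exists
  have h3 : ∀ᶠ N : ℕ in atTop, ∀ (k : Fin (m + 1)) (idx : Fin k → Fin n),
      |(∑ j ∈ Finset.range N, ∏ l, X (idx l) (ω j)) / N - ∫ ω, ∏ l, X (idx l) ω ∂μ| < δ := by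
    rw [eventually_all]; intro k
    rw [eventually_all]; intro idx
    simpa [Real.dist_eq] using (h2 k idx).eventually (Metric.ball_mem_nhds _ hδ)
  filter_upwards [h3] with N hN
  refine ⟨fun i j => X i (ω j), fun i j => h1 i j, fun k hk hkm idx => ?_⟩
  have := hN ⟨k, by omega⟩ idx
  unfold kappa
  rwa [Finset.sum_range] at this

lemma aux_pos {Ω : Type*} [MeasurableSpace Ω] (μ : Measure Ω) [IsProbabilityMeasure μ]
    {n : ℕ} (X : Fin n → Ω → ℝ) (hmeas : ∀ i, Measurable (X i)) (R : ℝ) (hR : Fin n → 0 < R)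
    (hbdd : ∀ i, ∀ᵐ ω ∂μ, |X i ω| ≤ R) (m : ℕ) (δ : ℝ) (hδ : 0 < δ) :
    ∀ᶠ N in atTop, 0 < (volume (DeltaR μ X R N m δ)).toReal := by
  filter_upwards [aux_nonempty μ X hmeas R hbdd m δ hδ] with N ⟨x, hx⟩
  refine ENNReal.toReal_pos ?_ (aux_vol_lt_top μ X R N m δ).ne
  let V : Set (Fin n → Fin N → ℝ) := {x | ∀ k : Fin (m + 1), 1 ≤ (k : ℕ) → ∀ idx : Fin k → Fin n,
      |kappa (fun j => ∏ l, x (idx l) j) - ∫ ω, ∏ l, X (idx l) ω ∂μ| < δ}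
  have hV : IsOpen V := by
    simp only [V, Set.ofPred_forall]
    refine isOpen_iInter_of_finite fun k => isOpen_iInter_of_finite fun _ =>
      isOpen_iInter_of_finite fun idx => ?_
    exact isOpen_lt ((aux_kappa_cont idx).sub continuous_const).abs continuous_const
  let W : Set (Fin n → Fin N → ℝ) := {x | ∀ i j, |x i j| < R}
  have hW : IsOpen W := by
    simp only [W, Set.ofPred_forall]
    exact isOpen_iInter_of_finite fun i => isOpen_iInter_of_finite fun j =>
      isOpen_lt (by fun_prop) continuous_const
  have hsub : V ∩ W ⊆ DeltaR μ X R N m δ := fun y hy =>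
    ⟨fun i j => (hy.2 i j).le, fun k h1 h2 idx => hy.1 ⟨k, by omega⟩ h1 idx⟩
  have hxV : x ∈ V := fun k h1 idx => hx.2 k h1 (by omega) idx
  have hcont : Tendsto (fun t : ℝ => t • x) (nhdsWithin 1 (Set.Iio 1)) (nhds x) := by
    have : Continuous (fun t : ℝ => t • x) := by fun_prop
    have := this.tendsto 1
    rw [one_smul] at this
    exact this.mono_left nhdsWithin_le_nhds
  have hev := hcont.eventually (hV.mem_nhds hxV)
  have hev2 : ∀ᶠ t : ℝ in nhdsWithin 1 (Set.Iio 1), t ∈ Set.Ioo (0 : ℝ) 1 :=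
    Ioo_mem_nhdsLT one_pos
  obtain ⟨t, ht1, ht2⟩ := (hev.and hev2).exists
  have hne : (V ∩ W).Nonempty := by
    refine ⟨t • x, ht1, fun i j => ?_⟩
    simp only [Pi.smul_apply, smul_eq_mul, abs_mul, abs_of_pos ht2.1]
    calc t * |x i j| ≤ t * R := mul_le_mul_of_nonneg_left (hx.1 i j) ht2.1.le
      _ < R := by nlinarith [ht2.2, hR i]
  exact (((hV.inter hW).measure_pos volume hne).trans_le (measure_mono hsub)).ne'

lemma aux_perm_vol {N : ℕ} (σ : Equiv.Perm (Fin N)) (S : Set (Fin N → ℝ)) :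
    volume {z : Fin N → ℝ | z ∘ σ ∈ S} = volume S := by
  have h := volume_measurePreserving_piCongrLeft (fun _ : Fin N => ℝ) σ.symm
  have h2 := h.measure_preimage_equiv S
  rw [← h2]
  congr 1
  ext z
  have : (MeasurableEquiv.piCongrLeft (fun _ : Fin N => ℝ) σ.symm) z = z ∘ σ := by
    funext j
    have := Equiv.piCongrLeft_apply_apply (fun _ : Fin N => ℝ) σ.symm z (σ j)
    rw [Equiv.symm_apply_apply] at this
    exact this
  simp only [Set.mem_preimage, this]
  rfl

/-- single-variable microstates as vectors -/
def auxA {Ω : Type*} [MeasurableSpace Ω] (μ : Measure Ω)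
    (X : Ω → ℝ) (R : ℝ) (N m : ℕ) (δ : ℝ) : Set (Fin N → ℝ) :=
  {y | (fun _ : Fin 1 => y) ∈ DeltaR μ (fun _ : Fin 1 => X) R N m δ}

lemma auxA_vol {Ω : Type*} [MeasurableSpace Ω] (μ : Measure Ω)
    (X : Ω → ℝ) (R : ℝ) (N m : ℕ) (δ : ℝ) :
    volume (auxA μ X R N m δ) = volume (DeltaR μ (fun _ : Fin 1 => X) R N m δ) := by
  have h := (volume_preserving_funUnique (Fin 1) (Fin N → ℝ)).symm
  exact h.measure_preimage_equiv (DeltaR μ (fun _ : Fin 1 => X) R N m δ)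

lemma auxA_meas {Ω : Type*} [MeasurableSpace Ω] (μ : Measure Ω)
    (X : Ω → ℝ) (R : ℝ) (N m : ℕ) (δ : ℝ) :
    MeasurableSet (auxA μ X R N m δ) :=
  (aux_meas μ (fun _ : Fin 1 => X) R N m δ).preimage (by fun_prop)

lemma auxA_perm {Ω : Type*} [MeasurableSpace Ω] (μ : Measure Ω)
    (X : Ω → ℝ) (R : ℝ) (N m : ℕ) (δ : ℝ) (σ : Equiv.Perm (Fin N)) (z : Fin N → ℝ) :
    z ∘ σ ∈ auxA μ X R N m δ ↔ z ∈ auxA μ X R N m δ := by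
  unfold auxA DeltaR
  refine and_congr ⟨fun h i j => ?_, fun h i j => h i (σ j)⟩ ?_
  · simpa using h i (σ.symm j)
  · have : ∀ k : ℕ, kappa (fun j => ∏ _l : Fin k, (z ∘ σ) j) = kappa (fun j => ∏ _l : Fin k, z j) := by
      intro k
      unfold kappa
      rw [← Equiv.sum_comp σ (fun j => ∏ _l : Fin k, z j)]; rfl
    simp only [this]

/-- strictly increasing single-variable microstates -/
def auxT {Ω : Type*} [MeasurableSpace Ω] (μ : Measure Ω)
    (X : Ω → ℝ) (R : ℝ) (N m : ℕ) (δ : ℝ) : Set (Fin N → ℝ) :=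
  {y | y ∈ auxA μ X R N m δ ∧ StrictMono y}

lemma auxT_meas {Ω : Type*} [MeasurableSpace Ω] (μ : Measure Ω)
    (X : Ω → ℝ) (R : ℝ) (N m : ℕ) (δ : ℝ) :
    MeasurableSet (auxT μ X R N m δ) := by
  refine (auxA_meas μ X R N m δ).inter (s₂ := {y : Fin N → ℝ | StrictMono y}) ?_
  simp only [StrictMono, Set.ofPred_forall]
  refine MeasurableSet.iInter fun a => MeasurableSet.iInter fun b => MeasurableSet.iInter fun _ => ?_
  exact measurableSet_lt (measurable_pi_apply a) (measurable_pi_apply b)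

lemma auxT_vol {Ω : Type*} [MeasurableSpace Ω] (μ : Measure Ω)
    (X : Ω → ℝ) (R : ℝ) (N m : ℕ) (δ : ℝ) :
    (N.factorial : ℝ≥0∞) * volume (auxT μ X R N m δ) ≤ volume (auxA μ X R N m δ) := by
  let U : Equiv.Perm (Fin N) → Set (Fin N → ℝ) := fun σ => {z | z ∘ σ ∈ auxT μ X R N m δ}
  have hU : ∀ σ, MeasurableSet (U σ) := fun σ =>
    (auxT_meas μ X R N m δ).preimage (measurable_pi_lambda _ fun j => measurable_pi_apply (σ j))
  have hd : Pairwise (Function.onFun Disjoint U) := by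
    intro σ τ hne
    refine Set.disjoint_left.2 fun z h1 h2 => hne ?_
    have hinj : Function.Injective z := by
      have := h1.2.injective
      rwa [Function.Injective.of_comp_iff' _ σ.bijective] at this
    have := Tuple.unique_monotone h1.2.monotone h2.2.monotone
    ext j
    exact congrArg _ (hinj (congrFun this j))
  have hs : (⋃ σ, U σ) ⊆ auxA μ X R N m δ := by
    refine Set.iUnion_subset fun σ z hz => ?_
    exact (auxA_perm μ X R N m δ σ z).1 hz.1
  have := measure_mono (μ := volume) hs
  rw [measure_iUnion hd hU, tsum_fintype] at this
  refine le_trans (le_of_eq ?_) this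
  rw [Finset.sum_congr rfl (fun σ _ => aux_perm_vol σ (auxT μ X R N m δ))]
  simp [Fintype.card_perm]

lemma aux_null {n N : ℕ} :
    volume {x : Fin n → Fin N → ℝ | ∃ i, ¬ Function.Injective (x i)} = 0 := by
  have h : {x : Fin n → Fin N → ℝ | ∃ i, ¬ Function.Injective (x i)} ⊆
      ⋃ (i : Fin n), ⋃ (j : Fin N), ⋃ (k : Fin N), ⋃ (_ : j ≠ k),
        {x : Fin n → Fin N → ℝ | x i j = x i k} := by
    rintro x ⟨i, hi⟩
    simp only [Function.Injective, not_forall] at hi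
    obtain ⟨j, k, h, hne⟩ := hi
    simp only [Set.mem_iUnion]
    exact ⟨i, j, k, hne, h⟩
  refine measure_mono_null h ?_
  refine measure_iUnion_null fun i => measure_iUnion_null fun j => measure_iUnion_null fun k =>
    measure_iUnion_null fun hne => ?_
  let L : (Fin n → Fin N → ℝ) →ₗ[ℝ] ℝ :=
    ((LinearMap.proj j : (Fin N → ℝ) →ₗ[ℝ] ℝ) - LinearMap.proj k) ∘ₗ LinearMap.proj i
  have hL : {x : Fin n → Fin N → ℝ | x i j = x i k} = (LinearMap.ker L : Set _) := by
    ext x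
    simp [L, sub_eq_zero]
  rw [hL]
  refine Measure.addHaar_submodule _ _ fun htop => ?_
  have hx : (fun _ => Pi.single j 1 : Fin n → Fin N → ℝ) ∈ LinearMap.ker L := htop ▸ trivial
  simp [L, hne.symm] at hx

lemma aux_key {Ω : Type*} [MeasurableSpace Ω] (μ : Measure Ω)
    {n : ℕ} (X : Fin n → Ω → ℝ) (R : ℝ) (N m : ℕ) (δ : ℝ) :
    volume (DeltaR μ X R N m δ) ≤
      (Nat.card (DeltaSymR μ X R N m δ) : ℝ≥0∞) * ∏ i, volume (auxT μ (X i) R N m δ) := by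
  let Z := {x : Fin n → Fin N → ℝ | ∃ i, ¬ Function.Injective (x i)}
  let B : (Fin n → Equiv.Perm (Fin N)) → Set (Fin n → Fin N → ℝ) := fun σ =>
    Set.univ.pi (fun i => {z | z ∘ σ i ∈ auxT μ (X i) R N m δ})
  have hB : ∀ σ, volume (B σ) = ∏ i, volume (auxT μ (X i) R N m δ) := by
    intro σ
    simp only [B, volume_pi_pi, aux_perm_vol]
  have hsub : DeltaR μ X R N m δ ⊆ Z ∪ ⋃ σ : DeltaSymR μ X R N m δ, B σ := by
    intro x hx
    by_cases hz : x ∈ Z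
    · exact Or.inl hz
    right
    have hinj : ∀ i, Function.Injective (x i) := by
      simpa [Z] using hz
    rw [Set.mem_iUnion]
    refine ⟨⟨fun i => Tuple.sort (x i), fun i => x i ∘ Tuple.sort (x i),
      fun i => Tuple.monotone_sort (x i), ?_⟩, fun i _ => ⟨?_, ?_⟩⟩
    · simpa using hx
    · refine (auxA_perm _ _ _ _ _ _ _ _).2 ⟨fun _ j => hx.1 i j, fun k h1 h2 _ => ?_⟩
      exact hx.2 k h1 h2 (fun _ => i)
    · exact (Tuple.monotone_sort (x i)).strictMono_of_injective
        ((hinj i).comp (Tuple.sort (x i)).injective)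
  calc volume (DeltaR μ X R N m δ) ≤ volume Z + volume (⋃ σ : DeltaSymR μ X R N m δ, B σ) :=
        (measure_mono hsub).trans (measure_union_le _ _)
    _ = volume (⋃ σ : DeltaSymR μ X R N m δ, B σ) := by rw [aux_null, zero_add]
    _ ≤ ∑ σ : DeltaSymR μ X R N m δ, volume (B σ) := measure_iUnion_fintype_le _ _
    _ = _ := by simp [hB, Nat.card_eq_fintype_card]

lemma aux_key_real {Ω : Type*} [MeasurableSpace Ω] (μ : Measure Ω)
    {n : ℕ} (X : Fin n → Ω → ℝ) (R : ℝ) (N m : ℕ) (δ : ℝ) :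
    (volume (DeltaR μ X R N m δ)).toReal ≤
      ((Nat.card (DeltaSymR μ X R N m δ) : ℝ) / (N.factorial : ℝ) ^ n) *
        ∏ i, (volume (DeltaR μ (fun _ : Fin 1 => X i) R N m δ)).toReal := by
  have hT : ∀ i, (volume (auxT μ (X i) R N m δ)).toReal ≤
      (volume (DeltaR μ (fun _ : Fin 1 => X i) R N m δ)).toReal / N.factorial := by
    intro i
    rw [le_div_iff₀ (by positivity), mul_comm]
    have h := auxT_vol μ (X i) R N m δ
    rw [auxA_vol] at h
    simpa using ENNReal.toReal_mono (aux_vol_lt_top _ _ _ _ _ _).ne h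
  have hfin : ∀ i, volume (auxT μ (X i) R N m δ) ≠ ⊤ := by
    intro i
    refine ((measure_mono (fun y hy => hy.1)).trans_lt (b := volume (auxA μ (X i) R N m δ)) ?_).ne
    rw [auxA_vol]; exact aux_vol_lt_top _ _ _ _ _ _
  have h1 := ENNReal.toReal_mono
    (ENNReal.mul_ne_top (ENNReal.natCast_ne_top _) (ENNReal.prod_ne_top fun i _ => hfin i))
    (aux_key μ X R N m δ)
  rw [ENNReal.toReal_mul, ENNReal.toReal_prod, ENNReal.toReal_natCast] at h1
  refine h1.trans ?_
  rw [div_mul_eq_mul_div, mul_div_assoc]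
  refine mul_le_mul_of_nonneg_left ?_ (Nat.cast_nonneg _)
  calc _ ≤ ∏ i, ((volume (DeltaR μ (fun _ : Fin 1 => X i) R N m δ)).toReal / N.factorial) :=
        Finset.prod_le_prod (fun _ _ => ENNReal.toReal_nonneg) (fun i _ => hT i)
    _ = _ := by rw [Finset.prod_div_distrib]; simp

lemma aux_tendsto (f : ℕ → ℝ → EReal)
    (hf : ∀ m m' δ δ', m ≤ m' → 0 < δ' → δ' ≤ δ → f m' δ' ≤ f m δ) :
    Tendsto (fun m : ℕ => f m (1 / ((m : ℝ) + 1))) atTop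
      (nhds (⨅ (m : ℕ) (δ : ℝ) (_ : 0 < δ), f m δ)) := by
  have hanti : Antitone (fun m : ℕ => f m (1 / ((m : ℝ) + 1))) := fun a b hab =>
    hf _ _ _ _ hab (by positivity) (one_div_le_one_div_of_le (by positivity) (by
      have : (a : ℝ) ≤ b := by exact_mod_cast hab
      linarith))
  have h := tendsto_atTop_iInf hanti
  have he : (⨅ m : ℕ, f m (1 / ((m : ℝ) + 1))) = ⨅ (m : ℕ) (δ : ℝ) (_ : 0 < δ), f m δ := by
    apply le_antisymm
    · refine le_iInf fun m => le_iInf fun δ => le_iInf fun hδ => ?_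
      obtain ⟨k, hk⟩ := exists_nat_one_div_lt hδ
      refine (iInf_le _ (max m k)).trans (hf _ _ _ _ (le_max_left _ _) (by positivity) ?_)
      refine le_trans (one_div_le_one_div_of_le (by positivity) ?_) hk.le
      have : (k : ℝ) ≤ (max m k : ℕ) := by exact_mod_cast le_max_right m k
      linarith
    · exact le_iInf fun m => iInf_le_of_le m <| iInf_le_of_le _ <| iInf_le _ (by positivity)
  rwa [he] at h

lemma aux_coe_sum {ι : Type*} (s : Finset ι) (a : ι → ℝ) :
    ((∑ i ∈ s, a i : ℝ) : EReal) = ∑ i ∈ s, (a i : EReal) := by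
  induction s using Finset.induction_on with
  | empty => simp
  | insert i s hi ih => rw [Finset.sum_insert hi, Finset.sum_insert hi, EReal.coe_add, ih]

lemma aux_sum_ne_top {ι : Type*} (s : Finset ι) (a : ι → EReal) (ha : ∀ i, a i ≠ ⊤) :
    ∑ i ∈ s, a i ≠ ⊤ := by
  induction s using Finset.induction_on with
  | empty => simp
  | insert i s hi ih =>
    rw [Finset.sum_insert hi]
    exact EReal.add_ne_top (ha i) ih

lemma aux_sum_tendsto {ι : Type*} (s : Finset ι) (g : ι → ℕ → EReal) (a : ι → EReal)
    (ha : ∀ i, a i ≠ ⊤) (hg : ∀ i, Tendsto (g i) atTop (nhds (a i))) :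
    Tendsto (fun m => ∑ i ∈ s, g i m) atTop (nhds (∑ i ∈ s, a i)) := by
  induction s using Finset.induction_on with
  | empty => simp
  | insert i s hi ih =>
    simp only [Finset.sum_insert hi]
    exact (EReal.continuousAt_add (p := (a i, ∑ i ∈ s, a i)) (Or.inl (ha i))
      (Or.inr (aux_sum_ne_top s a ha))).tendsto.comp ((hg i).prodMk_nhds ih)

lemma aux_limsup_sum {ι : Type*} (s : Finset ι) (u : ι → ℕ → EReal)
    (hu : ∀ i, limsup (u i) atTop ≠ ⊤) :
    limsup (fun N => ∑ i ∈ s, u i N) atTop ≤ ∑ i ∈ s, limsup (u i) atTop := by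
  induction s using Finset.induction_on with
  | empty => simp
  | insert i s hi ih =>
    simp only [Finset.sum_insert hi]
    have hne : limsup (fun N => ∑ i ∈ s, u i N) atTop ≠ ⊤ :=
      (ih.trans_lt (aux_sum_ne_top s _ hu).lt_top).ne
    exact (EReal.limsup_add_le (u := u i) (v := fun N => ∑ i ∈ s, u i N) (Or.inr hne)
      (Or.inl (hu i))).trans (add_le_add le_rfl ih)

lemma aux_volQ_mono {Ω : Type*} [MeasurableSpace Ω] (μ : Measure Ω) [IsProbabilityMeasure μ]
    {n : ℕ} (X : Fin n → Ω → ℝ) (hmeas : ∀ i, Measurable (X i)) (R : ℝ) (hR : Fin n → 0 < R)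
    (hbdd : ∀ i, ∀ᵐ ω ∂μ, |X i ω| ≤ R) (m m' : ℕ) (δ δ' : ℝ) (hm : m ≤ m') (hδ' : 0 < δ')
    (hδ : δ' ≤ δ) :
    ∀ᶠ N in atTop, volQ μ X R N m' δ' ≤ volQ μ X R N m δ := by
  filter_upwards [aux_pos μ X hmeas R hR hbdd m' δ' hδ'] with N hN
  unfold volQ
  refine div_le_div_of_nonneg_right (Real.log_le_log hN ?_) (Nat.cast_nonneg _)
  exact ENNReal.toReal_mono (aux_vol_lt_top _ _ _ _ _ _).ne
    (measure_mono (aux_mono μ X R N hm hδ))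

lemma aux_card_pos {Ω : Type*} [MeasurableSpace Ω] (μ : Measure Ω)
    {n : ℕ} (X : Fin n → Ω → ℝ) (R : ℝ) (N m : ℕ) (δ : ℝ)
    (h : 0 < (volume (DeltaR μ X R N m δ)).toReal) :
    0 < (Nat.card (DeltaSymR μ X R N m δ) : ℝ) := by
  rcases Nat.eq_zero_or_pos (Nat.card (DeltaSymR μ X R N m δ)) with h0 | h0
  · have := aux_key_real μ X R N m δ
    rw [h0] at this
    simp at this
    linarith
  · exact_mod_cast h0

lemma aux_symQ_mono {Ω : Type*} [MeasurableSpace Ω] (μ : Measure Ω) [IsProbabilityMeasure μ]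
    {n : ℕ} (X : Fin n → Ω → ℝ) (hmeas : ∀ i, Measurable (X i)) (R : ℝ) (hR : Fin n → 0 < R)
    (hbdd : ∀ i, ∀ᵐ ω ∂μ, |X i ω| ≤ R) (m m' : ℕ) (δ δ' : ℝ) (hm : m ≤ m') (hδ' : 0 < δ')
    (hδ : δ' ≤ δ) :
    ∀ᶠ N in atTop, symQ μ X R N m' δ' ≤ symQ μ X R N m δ := by
  filter_upwards [aux_pos μ X hmeas R hR hbdd m' δ' hδ'] with N hN
  have hc := aux_card_pos μ X R N m' δ' hN
  have hle : Nat.card (DeltaSymR μ X R N m' δ') ≤ Nat.card (DeltaSymR μ X R N m δ) := by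
    refine Nat.card_mono (Set.toFinite _) ?_
    rintro σ ⟨x, h1, h2⟩
    exact ⟨x, h1, aux_mono μ X R N hm hδ h2⟩
  unfold symQ
  refine div_le_div_of_nonneg_right (Real.log_le_log (by positivity) ?_) (Nat.cast_nonneg _)
  exact div_le_div_of_nonneg_right (by exact_mod_cast hle) (by positivity)

lemma aux_symQ_nonpos {Ω : Type*} [MeasurableSpace Ω] (μ : Measure Ω)
    {n : ℕ} (X : Fin n → Ω → ℝ) (R : ℝ) (N m : ℕ) (δ : ℝ) : symQ μ X R N m δ ≤ 0 := by
  unfold symQ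
  refine div_nonpos_of_nonpos_of_nonneg (Real.log_nonpos (by positivity) ?_) (Nat.cast_nonneg _)
  refine div_le_one_of_le₀ ?_ (by positivity)
  have h := Nat.card_le_card_of_injective (Subtype.val : DeltaSymR μ X R N m δ → _)
    Subtype.val_injective
  have h2 : Nat.card (Fin n → Equiv.Perm (Fin N)) = N.factorial ^ n := by
    simp [Nat.card_eq_fintype_card, Fintype.card_perm]
  rw [h2] at h
  exact_mod_cast h

lemma aux_volQ_bdd {Ω : Type*} [MeasurableSpace Ω] (μ : Measure Ω) [IsProbabilityMeasure μ]
    (X : Fin 1 → Ω → ℝ) (hmeas : ∀ i, Measurable (X i)) (R : ℝ) (hR : 0 < R)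
    (hbdd : ∀ i, ∀ᵐ ω ∂μ, |X i ω| ≤ R) (m : ℕ) (δ : ℝ) (hδ : 0 < δ) :
    limsup (fun N : ℕ => ((volQ μ X R N m δ : ℝ) : EReal)) atTop ≠ ⊤ := by
  have : limsup (fun N : ℕ => ((volQ μ X R N m δ : ℝ) : EReal)) atTop
      ≤ ((Real.log (2 * R) : ℝ) : EReal) := by
    refine limsup_le_of_le (by isBoundedDefault) ?_
    filter_upwards [aux_pos μ X hmeas R (fun _ => hR) hbdd m δ hδ, eventually_gt_atTop 0]
      with N hN hN0
    rw [EReal.coe_le_coe_iff]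
    unfold volQ
    have hN0' : (0 : ℝ) < N := by exact_mod_cast hN0
    rw [div_le_iff₀ hN0', mul_comm, ← Real.log_pow]
    exact Real.log_le_log hN (aux_vol_le μ X R hR N m δ)
  exact (this.trans_lt (EReal.coe_lt_top _)).ne

lemma aux_log_key {Ω : Type*} [MeasurableSpace Ω] (μ : Measure Ω)
    {n : ℕ} (X : Fin n → Ω → ℝ) (R : ℝ) (N m : ℕ) (δ : ℝ)
    (h : 0 < (volume (DeltaR μ X R N m δ)).toReal) :
    volQ μ X R N m δ ≤ ∑ i, volQ μ (fun _ : Fin 1 => X i) R N m δ + symQ μ X R N m δ := by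
  have hc := aux_card_pos μ X R N m δ h
  have hk := aux_key_real μ X R N m δ
  have hp : ∀ i, (volume (DeltaR μ (fun _ : Fin 1 => X i) R N m δ)).toReal ≠ 0 := by
    intro i hi
    rw [Finset.prod_eq_zero (Finset.mem_univ i) hi] at hk
    linarith
  unfold volQ symQ
  rw [← Finset.sum_div, ← add_div]
  refine div_le_div_of_nonneg_right ?_ (Nat.cast_nonneg _)
  refine (Real.log_le_log h hk).trans (le_of_eq ?_)
  rw [Real.log_mul (by positivity) (Finset.prod_ne_zero_iff.2 fun i _ => hp i),
    Real.log_prod (fun i _ => hp i), add_comm]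

lemma aux_main {Ω : Type*} [MeasurableSpace Ω] (μ : Measure Ω)
    [IsProbabilityMeasure μ] (n : ℕ) (X : Fin n → Ω → ℝ)
    (hmeas : ∀ i, Measurable (X i)) (R : ℝ) (hR : Fin n → 0 < R)
    (hbdd : ∀ i, ∀ᵐ ω ∂μ, |X i ω| ≤ R)
    (hvol : MicrostateVolumeFormula μ X R)
    (hvoli : ∀ i, MicrostateVolumeFormula μ (fun _ : Fin 1 => X i) R) :
    diffEntropy volume (Measure.map (fun ω (i : Fin n) => X i ω) μ)
      ≤ (∑ i, diffEntropy volume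
            (Measure.map (fun ω (_ : Fin 1) => X i ω) μ))
          - IsymUpper μ X R := by
  have hF := aux_tendsto (fun m δ =>
    Filter.liminf (fun N : ℕ => ((symQ μ X R N m δ : ℝ) : EReal)) atTop)
    (fun m m' δ δ' h1 h2 h3 => liminf_le_liminf
      ((aux_symQ_mono μ X hmeas R hR hbdd m m' δ δ' h1 h2 h3).mono
        fun N h => EReal.coe_le_coe_iff.2 h))
  have hG := fun i => aux_tendsto (fun m δ =>
    Filter.limsup (fun N : ℕ => ((volQ μ (fun _ : Fin 1 => X i) R N m δ : ℝ) : EReal)) atTop)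
    (fun m m' δ δ' h1 h2 h3 => limsup_le_limsup
      ((aux_volQ_mono μ (fun _ : Fin 1 => X i) (fun _ => hmeas i) R (fun _ => hR i)
        (fun _ => hbdd i) m m' δ δ' h1 h2 h3).mono
        fun N h => EReal.coe_le_coe_iff.2 h))
  have hGtop : ∀ i m δ, 0 < δ → Filter.limsup
      (fun N : ℕ => ((volQ μ (fun _ : Fin 1 => X i) R N m δ : ℝ) : EReal)) atTop ≠ ⊤ :=
    fun i m δ hδ => aux_volQ_bdd μ (fun _ : Fin 1 => X i) (fun _ => hmeas i) R (hR i)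
      (fun _ => hbdd i) m δ hδ
  have hFtop : ∀ m δ, Filter.liminf (fun N : ℕ => ((symQ μ X R N m δ : ℝ) : EReal)) atTop ≤ 0 := by
    intro m δ
    refine (liminf_le_liminf (v := fun _ => (0 : EReal)) (Eventually.of_forall fun N => ?_)).trans
      (by simp)
    exact_mod_cast aux_symQ_nonpos μ X R N m δ
  simp only [← (hvoli _).1] at hG
  have hHtop : ∀ i, diffEntropy volume (Measure.map (fun ω (_ : Fin 1) => X i ω) μ) ≠ ⊤ := by
    intro i
    rw [(hvoli i).1]
    refine (lt_of_le_of_lt ?_ (hGtop i 0 1 one_pos).lt_top).ne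
    exact iInf_le_of_le 0 <| iInf_le_of_le 1 <| iInf_le _ one_pos
  have hatop : (⨅ (m : ℕ) (δ : ℝ) (_ : 0 < δ),
      Filter.liminf (fun N : ℕ => ((symQ μ X R N m δ : ℝ) : EReal)) atTop) ≠ ⊤ := by
    refine (lt_of_le_of_lt (b := 0) ?_ EReal.zero_lt_top).ne
    exact iInf_le_of_le 0 <| iInf_le_of_le 1 <| (iInf_le _ one_pos).trans (hFtop _ _)
  unfold IsymUpper
  rw [sub_eq_add_neg, neg_neg]
  have hsum := aux_sum_tendsto Finset.univ _ _ hHtop hG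
  have hlim := (EReal.continuousAt_add (p := (_, _)) (Or.inl (aux_sum_ne_top Finset.univ _ hHtop))
      (Or.inr hatop)).tendsto.comp (hsum.prodMk_nhds hF)
  refine ge_of_tendsto' hlim fun m => ?_
  simp only [Function.comp_apply]
  have hδ : (0 : ℝ) < 1 / ((m : ℝ) + 1) := by positivity
  generalize (1 / ((m : ℝ) + 1)) = δ at hδ
  rw [hvol.2]
  refine (iInf_le_of_le m <| iInf_le_of_le δ <| iInf_le _ hδ).trans ?_
  have hls := aux_limsup_sum Finset.univ (fun (i : Fin n) N =>
    ((volQ μ (fun _ : Fin 1 => X i) R N m δ : ℝ) : EReal)) (fun i => hGtop i m δ hδ)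
  have hlstop := (hls.trans_lt (aux_sum_ne_top Finset.univ _
    (fun i => hGtop i m δ hδ)).lt_top).ne
  refine le_trans ?_ (add_le_add hls le_rfl)
  refine le_trans ?_ (EReal.liminf_add_le (Or.inr ?_) (Or.inl hlstop))
  · refine liminf_le_liminf ?_
    filter_upwards [aux_pos μ X hmeas R hR hbdd m δ hδ] with N hN
    have := EReal.coe_le_coe_iff.2 (aux_log_key μ X R N m δ hN)
    refine this.trans (le_of_eq ?_)
    rw [EReal.coe_add, aux_coe_sum]
    rfl
  · exact ((hFtop m δ).trans_lt EReal.zero_lt_top).ne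

/-- Inequality (1.3): `H(X₁,…,Xₙ) ≤ ∑ᵢ H(Xᵢ) - Ī_sym(X₁,…,Xₙ)` for bounded
random variables and `R ≥ maxᵢ ‖Xᵢ‖_∞`. -/
theorem stmt8 {Ω : Type*} [MeasurableSpace Ω] (μ : Measure Ω)
    [IsProbabilityMeasure μ] (n : ℕ) (X : Fin n → Ω → ℝ)
    (hmeas : ∀ i, Measurable (X i)) (R : ℝ)
    (hbdd : ∀ i, ∀ᵐ ω ∂μ, |X i ω| ≤ R)
    (hvol : MicrostateVolumeFormula μ X R)
    (hvoli : ∀ i, MicrostateVolumeFormula μ (fun _ : Fin 1 => X i) R) :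
    diffEntropy volume (Measure.map (fun ω (i : Fin n) => X i ω) μ)
      ≤ (∑ i, diffEntropy volume
            (Measure.map (fun ω (_ : Fin 1) => X i ω) μ))
          - IsymUpper μ X R := by
  by_cases hR : Fin n → 0 < R
  · exact aux_main μ n X hmeas R hR hbdd hvol hvoli
  · simp only [Classical.not_forall] at hR
    obtain ⟨i, hi⟩ := hR
    have hR0 : R ≤ 0 := not_lt.1 hi
    have hz : (fun ω (i : Fin n) => X i ω) =ᵐ[μ] fun _ => 0 := by
      filter_upwards [ae_all_iff.2 hbdd] with ω hω
      funext i
      exact abs_nonpos_iff.1 ((hω i).trans hR0)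
    have : ¬ (Measure.map (fun ω (i : Fin n) => X i ω) μ) ≪
        (volume : Measure (Fin n → ℝ)) := by
      intro hac
      haveI : Nonempty (Fin n) := ⟨i⟩
      have h0 : (volume : Measure (Fin n → ℝ)) {0} = 0 := measure_singleton _
      have h1 := hac h0
      rw [Measure.map_congr hz, Measure.map_const] at h1
      simp at h1
    unfold diffEntropy
    rw [if_neg this]
    exact bot_le
end

section
/- Let X_1,...,X_n be bounded real random variables. Then H(X_1,...,X_n) = −I_sym(X_1,...,X_n) + ∑_{i=1}^n H(X_i) = −Ī_sym(X_1,...,X_n) + ∑_{i=1}^n H(X_i); in particular I_sym = Ī_sym whenever ∑_i H(X_i) is finite or H(X_1,...,X_n) > −∞. -/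
open MeasureTheory Filter
open scoped Classical ENNReal

namespace Aux

lemma inj_null (N : ℕ) : volume {x : Fin N → ℝ | ¬ Function.Injective x} = 0 := by
  have hsub : {x : Fin N → ℝ | ¬ Function.Injective x} ⊆
      ⋃ p : {p : Fin N × Fin N // p.1 ≠ p.2}, {x : Fin N → ℝ | x p.1.1 = x p.1.2} := by
    intro x hx
    simp only [Function.Injective, Set.mem_ofPred_eq, not_forall] at hx
    obtain ⟨a, b, h1, h2⟩ := hx
    exact Set.mem_iUnion.2 ⟨⟨(a, b), h2⟩, h1⟩
  refine measure_mono_null hsub (measure_iUnion_null fun p => ?_)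
  obtain ⟨⟨a, b⟩, hab⟩ := p
  let S : Submodule ℝ (Fin N → ℝ) :=
    LinearMap.ker ((LinearMap.proj a : (Fin N → ℝ) →ₗ[ℝ] ℝ) - LinearMap.proj b)
  have hS : S ≠ ⊤ := by
    intro h
    have : (Pi.single a 1 : Fin N → ℝ) ∈ S := by rw [h]; trivial
    simp only [S, LinearMap.mem_ker, LinearMap.sub_apply, LinearMap.proj_apply] at this
    rw [Pi.single_eq_same, Pi.single_eq_of_ne (Ne.symm hab)] at this
    norm_num at this
  have := Measure.addHaar_submodule volume S hS
  convert this using 2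
  ext x
  simp [S, sub_eq_zero]

lemma vol_comp {N : ℕ} (σ : Equiv.Perm (Fin N)) (E : Set (Fin N → ℝ)) :
    volume {y : Fin N → ℝ | y ∘ σ ∈ E} = volume E := by
  have h := (volume_measurePreserving_piCongrLeft (fun _ : Fin N => ℝ) σ.symm)
  have := h.measure_preimage_equiv E
  rw [← this]
  congr 1
  ext y
  show y ∘ σ ∈ E ↔ (MeasurableEquiv.piCongrLeft (fun _ : Fin N => ℝ) σ.symm) y ∈ E
  have : (MeasurableEquiv.piCongrLeft (fun _ : Fin N => ℝ) σ.symm) y = y ∘ σ := by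
    funext j
    have := MeasurableEquiv.piCongrLeft_apply_apply (β := fun _ : Fin N => ℝ) σ.symm y (σ j)
    simpa using this
  rw [this]

/-- the strictly increasing vectors -/
def Smono (N : ℕ) : Set (Fin N → ℝ) := {x | StrictMono x}

lemma meas_Smono (N : ℕ) : MeasurableSet (Smono N) := by
  have : Smono N = ⋂ (a : Fin N) (b : Fin N) (_ : a < b), {x : Fin N → ℝ | x a < x b} := by
    ext x; simp [Smono, StrictMono]
  rw [this]
  refine MeasurableSet.iInter fun a => MeasurableSet.iInter fun b => MeasurableSet.iInter fun _ => ?_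
  exact measurableSet_lt (measurable_pi_apply a) (measurable_pi_apply b)

lemma perm_unique {N : ℕ} {y : Fin N → ℝ} {σ τ : Equiv.Perm (Fin N)}
    (h1 : StrictMono (y ∘ σ)) (h2 : StrictMono (y ∘ τ)) : σ = τ := by
  have hinj : Function.Injective y := by
    have := h1.injective.comp σ.symm.injective
    simpa [Function.comp_assoc] using this
  have e1 := (Tuple.unique_monotone h1.monotone h2.monotone)
  ext j
  have := congrFun e1 j
  exact congrArg _ (hinj this)

lemma exists_sort {N : ℕ} {y : Fin N → ℝ} (hy : Function.Injective y) :
    ∃ σ : Equiv.Perm (Fin N), StrictMono (y ∘ σ) :=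
  ⟨Tuple.sort y, (Tuple.monotone_sort y).strictMono_of_injective (hy.comp (Equiv.injective _))⟩

lemma vol_sym {N : ℕ} (D : Set (Fin N → ℝ)) (hD : MeasurableSet D)
    (hinv : ∀ y ∈ D, ∀ σ : Equiv.Perm (Fin N), y ∘ σ ∈ D) :
    volume D = N.factorial * volume (D ∩ Smono N) := by
  have hmeas : ∀ σ : Equiv.Perm (Fin N), MeasurableSet {y : Fin N → ℝ | y ∘ σ ∈ D ∩ Smono N} := by
    intro σ
    have : Measurable (fun y : Fin N → ℝ => y ∘ σ) :=
      measurable_pi_lambda _ fun j => measurable_pi_apply _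
    exact this (hD.inter (meas_Smono N))
  have h1 : volume (⋃ σ ∈ (Finset.univ : Finset (Equiv.Perm (Fin N))),
      {y : Fin N → ℝ | y ∘ σ ∈ D ∩ Smono N}) = N.factorial * volume (D ∩ Smono N) := by
    rw [measure_biUnion_finset]
    · simp only [vol_comp, Finset.sum_const, Finset.card_univ, Fintype.card_perm, Fintype.card_fin,
        nsmul_eq_mul]
    · intro σ _ τ _ hne
      refine Set.disjoint_left.2 fun y hy1 hy2 => hne ?_
      exact perm_unique hy1.2 hy2.2
    · exact fun σ _ => hmeas σ
  rw [← h1]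
  apply measure_congr
  have hae : ∀ᵐ y : Fin N → ℝ, Function.Injective y := by
    rw [ae_iff]; exact inj_null N
  filter_upwards [hae] with y hy
  apply propext
  show y ∈ D ↔ y ∈ ⋃ σ ∈ (Finset.univ : Finset (Equiv.Perm (Fin N))),
      {y : Fin N → ℝ | y ∘ σ ∈ D ∩ Smono N}
  simp only [Finset.mem_univ, Set.iUnion_true, Set.mem_iUnion]
  constructor
  · intro h
    obtain ⟨σ, hσ⟩ := exists_sort hy
    exact ⟨σ, hinv y h σ, hσ⟩
  · rintro ⟨σ, h, -⟩
    have := hinv _ h σ.symm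
    simpa [Function.comp_assoc] using this

section
variable {Ω : Type*} [MeasurableSpace Ω] (μ : Measure Ω)
    {n : ℕ} (X : Fin n → Ω → ℝ) (R : ℝ) (N m : ℕ) (δ : ℝ)

lemma meas_DeltaR : MeasurableSet (DeltaR μ X R N m δ) := by
  have : DeltaR μ X R N m δ = (⋂ (i : Fin n) (j : Fin N), {x | |x i j| ≤ R}) ∩
    ⋂ (k : ℕ) (_ : 1 ≤ k) (_ : k ≤ m) (idx : Fin k → Fin n),
      {x | |kappa (fun j => ∏ l, x (idx l) j) - ∫ ω, ∏ l, X (idx l) ω ∂μ| < δ} := by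
    ext x; simp [DeltaR]
  rw [this]
  refine MeasurableSet.inter ?_ ?_
  · refine MeasurableSet.iInter fun i => MeasurableSet.iInter fun j => ?_
    exact measurableSet_le (by fun_prop) measurable_const
  · refine MeasurableSet.iInter fun k => MeasurableSet.iInter fun _ => MeasurableSet.iInter fun _ =>
      MeasurableSet.iInter fun idx => ?_
    refine measurableSet_lt ?_ measurable_const
    unfold kappa
    fun_prop

/-- marginal microstates, as vectors -/
def DD (i : Fin n) : Set (Fin N → ℝ) :=
  {y | (fun _ : Fin 1 => y) ∈ DeltaR μ (fun _ : Fin 1 => X i) R N m δ}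

lemma vol_DD (i : Fin n) : volume (DeltaR μ (fun _ : Fin 1 => X i) R N m δ)
    = volume (DD μ X R N m δ i) := by
  have h := (volume_preserving_funUnique (Fin 1) (Fin N → ℝ)).symm.measure_preimage_equiv
    (DeltaR μ (fun _ : Fin 1 => X i) R N m δ)
  have e : (⇑(MeasurableEquiv.funUnique (Fin 1) (Fin N → ℝ)).symm ⁻¹'
      DeltaR μ (fun _ : Fin 1 => X i) R N m δ) = DD μ X R N m δ i := rfl
  rw [e] at h
  rw [h]
  congr!

lemma meas_DD (i : Fin n) : MeasurableSet (DD μ X R N m δ i) := by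
  have : Measurable (fun (y : Fin N → ℝ) (_ : Fin 1) => y) := by fun_prop
  exact this (meas_DeltaR μ (fun _ : Fin 1 => X i) R N m δ)

lemma kappa_comp {N : ℕ} (x : Fin N → ℝ) (σ : Equiv.Perm (Fin N)) :
    kappa (fun j => x (σ j)) = kappa x := by
  unfold kappa; rw [Equiv.sum_comp σ x]

lemma DD_inv (i : Fin n) : ∀ y ∈ DD μ X R N m δ i, ∀ σ : Equiv.Perm (Fin N),
    y ∘ σ ∈ DD μ X R N m δ i := by
  intro y hy σ
  refine ⟨fun a j => hy.1 a (σ j), fun k h1 h2 idx => ?_⟩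
  have := hy.2 k h1 h2 idx
  rw [← kappa_comp _ σ] at this
  exact this

lemma mem_DD {x : Fin n → Fin N → ℝ} (hx : x ∈ DeltaR μ X R N m δ) (i : Fin n) :
    x i ∈ DD μ X R N m δ i :=
  ⟨fun _ j => hx.1 i j, fun k h1 h2 _ => hx.2 k h1 h2 (fun _ => i)⟩

/-- cells -/
def cell (E : Fin n → Set (Fin N → ℝ)) (σ : Fin n → Equiv.Perm (Fin N)) :
    Set (Fin n → Fin N → ℝ) := {x | ∀ i, x i ∘ σ i ∈ E i}

lemma vol_cell (E : Fin n → Set (Fin N → ℝ)) (σ : Fin n → Equiv.Perm (Fin N)) :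
    volume (cell N E σ) = ∏ i, volume (E i) := by
  have : cell N E σ = Set.pi Set.univ (fun i => {y : Fin N → ℝ | y ∘ σ i ∈ E i}) := by
    ext x; simp [cell]
  rw [this, volume_pi_pi]
  simp only [vol_comp]

lemma meas_cell (E : Fin n → Set (Fin N → ℝ)) (hE : ∀ i, MeasurableSet (E i))
    (σ : Fin n → Equiv.Perm (Fin N)) : MeasurableSet (cell N E σ) := by
  have : cell N E σ = Set.pi Set.univ (fun i => {y : Fin N → ℝ | y ∘ σ i ∈ E i}) := by
    ext x; simp [cell]
  rw [this]
  refine MeasurableSet.univ_pi fun i => ?_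
  have : Measurable (fun y : Fin N → ℝ => y ∘ σ i) :=
      measurable_pi_lambda _ fun j => measurable_pi_apply _
  exact this (hE i)

/-- the marginal strictly increasing microstates -/
def EE (i : Fin n) : Set (Fin N → ℝ) := DD μ X R N m δ i ∩ Smono N

lemma vol_EE (i : Fin n) : volume (DeltaR μ (fun _ : Fin 1 => X i) R N m δ)
    = N.factorial * volume (EE μ X R N m δ i) := by
  rw [vol_DD, vol_sym _ (meas_DD μ X R N m δ i) (DD_inv μ X R N m δ i)]; rfl

lemma card_eq (A : Set (Fin n → Equiv.Perm (Fin N))) : Nat.card A = A.toFinset.card := by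
  rw [Nat.card_eq_fintype_card, Set.toFinset_card]

lemma prod_vol : ∏ i, volume (DeltaR μ (fun _ : Fin 1 => X i) R N m δ)
    = (N.factorial : ℝ≥0∞) ^ n * ∏ i, volume (EE μ X R N m δ i) := by
  simp only [vol_EE, Finset.prod_mul_distrib, Finset.prod_const, Finset.card_univ, Fintype.card_fin]

lemma upper_vol : volume (DeltaR μ X R N m δ) * (N.factorial : ℝ≥0∞) ^ n ≤
    (Nat.card (DeltaSymR μ X R N m δ) : ℝ≥0∞) *
      ∏ i, volume (DeltaR μ (fun _ : Fin 1 => X i) R N m δ) := by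
  rw [prod_vol, mul_comm, mul_left_comm]
  gcongr
  have hae : ∀ᵐ x : Fin n → Fin N → ℝ, ∀ i, Function.Injective (x i) := by
    rw [ae_all_iff]
    intro i
    rw [ae_iff]
    exact Measure.pi_eval_preimage_null (ι := Fin n) (α := fun _ => Fin N → ℝ) (i := i)
      (fun _ => volume) (inj_null N)
  calc volume (DeltaR μ X R N m δ)
      ≤ volume (⋃ σ ∈ (DeltaSymR μ X R N m δ).toFinset, cell N (EE μ X R N m δ) σ) := by
        apply measure_mono_ae
        filter_upwards [hae] with x hx hxD
        choose σ hσ using fun i => exists_sort (hx i)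
        show x ∈ ⋃ σ ∈ (DeltaSymR μ X R N m δ).toFinset, cell N (EE μ X R N m δ) σ
        simp only [Set.mem_iUnion]
        refine ⟨σ, ?_, fun i => ⟨DD_inv μ X R N m δ i _ (mem_DD μ X R N m δ hxD i) _, hσ i⟩⟩
        rw [Set.mem_toFinset]
        refine ⟨fun i => x i ∘ σ i, fun i => (hσ i).monotone, ?_⟩
        have : (fun i j => (x i ∘ σ i) ((σ i)⁻¹ j)) = x := by
          ext i j; simp
        rw [this]; exact hxD
    _ ≤ ∑ σ ∈ (DeltaSymR μ X R N m δ).toFinset, volume (cell N (EE μ X R N m δ) σ) :=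
        measure_biUnion_finset_le _ _
    _ = _ := by
        simp only [vol_cell, Finset.sum_const, nsmul_eq_mul, card_eq]

lemma lower_vol (m' : ℕ) (δ' : ℝ)
    (hsub : ∀ σ ∈ DeltaSymR μ X R N m' δ', ∀ y : Fin n → Fin N → ℝ, (∀ i, Monotone (y i)) →
      (∀ i, y i ∈ DD μ X R N m' δ' i) → (fun i j => y i ((σ i)⁻¹ j)) ∈ DeltaR μ X R N m δ) :
    (Nat.card (DeltaSymR μ X R N m' δ') : ℝ≥0∞) *
      ∏ i, volume (DeltaR μ (fun _ : Fin 1 => X i) R N m' δ') ≤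
    volume (DeltaR μ X R N m δ) * (N.factorial : ℝ≥0∞) ^ n := by
  rw [prod_vol, mul_left_comm, mul_comm (volume _)]
  gcongr
  calc _ = ∑ σ ∈ (DeltaSymR μ X R N m' δ').toFinset, volume (cell N (EE μ X R N m' δ') σ) := by
        simp only [vol_cell, Finset.sum_const, nsmul_eq_mul, card_eq]
    _ = volume (⋃ σ ∈ (DeltaSymR μ X R N m' δ').toFinset, cell N (EE μ X R N m' δ') σ) := by
        rw [measure_biUnion_finset]
        · intro σ _ τ _ hne
          refine Set.disjoint_left.2 fun y hy1 hy2 => hne ?_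
          funext i
          exact perm_unique (hy1 i).2 (hy2 i).2
        · exact fun σ _ => meas_cell N _ (fun i => (meas_DD μ X R N m' δ' i).inter (meas_Smono N)) σ
    _ ≤ _ := by
        apply measure_mono
        intro x hx
        simp only [Set.mem_iUnion, Set.mem_toFinset] at hx
        obtain ⟨σ, hσ, hx⟩ := hx
        have := hsub σ hσ (fun i => x i ∘ σ i) (fun i => (hx i).2.monotone) (fun i => (hx i).1)
        have h2 : (fun i j => (x i ∘ σ i) ((σ i)⁻¹ j)) = x := by
          ext i j; simp
        rw [h2] at this; exact this

end

lemma lip_sorted {N : ℕ} (x y : Fin N → ℝ) (hx : Monotone x) (hy : Monotone y) :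
    ∃ f : ℝ → ℝ, (∀ a b, |f a - f b| ≤ |a - b|) ∧ f 0 = 0 ∧
      ∀ j, f (y j) - f (x j) = |x j - y j| := by
  let c : (Fin N → ℝ) → ℝ → ℝ := fun z t => ((Finset.univ.filter fun j => z j < t).card : ℝ)
  have hc : ∀ z, Monotone (c z) := by
    intro z s t hst
    simp only [c, Nat.cast_le]
    apply Finset.card_le_card
    intro j hj
    simp only [Finset.mem_filter, Finset.mem_univ, true_and] at hj ⊢
    exact lt_of_lt_of_le hj hst
  let h : ℝ → ℝ := fun t => if c y t < c x t then 1 else -1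
  have hm : Measurable h :=
    Measurable.ite (measurableSet_lt (hc y).measurable (hc x).measurable)
      measurable_const measurable_const
  have hb : ∀ t, ‖h t‖ ≤ 1 := by
    intro t; simp only [h]; split_ifs <;> simp
  have hint : ∀ a b, IntervalIntegrable h volume a b := by
    intro a b
    refine (intervalIntegrable_const (c := (1 : ℝ))).mono_fun hm.aestronglyMeasurable ?_
    refine Filter.Eventually.of_forall fun t => ?_
    simpa using hb t
  have hcmp : ∀ (u v : Fin N → ℝ), Monotone u → Monotone v → ∀ j t, u j < t → t ≤ v j →
      c v t < c u t := by
    intro u v hu hv j t h1 h2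
    simp only [c, Nat.cast_lt]
    apply Finset.card_lt_card
    rw [Finset.ssubset_iff_of_subset]
    · refine ⟨j, ?_, ?_⟩
      · simpa using h1
      · simpa using h2
    · intro i hi
      simp only [Finset.mem_filter, Finset.mem_univ, true_and] at hi ⊢
      have : i < j := by
        by_contra hcon
        have := hv (not_lt.1 hcon)
        linarith
      exact lt_of_le_of_lt (hu this.le) h1
  have hdiff : ∀ a b, (∫ t in (0:ℝ)..b, h t) - (∫ t in (0:ℝ)..a, h t) = ∫ t in a..b, h t :=
    fun a b => intervalIntegral.integral_interval_sub_left (hint _ _) (hint _ _)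
  refine ⟨fun s => ∫ t in (0:ℝ)..s, h t, fun a b => ?_, by simp, fun j => ?_⟩
  · show |(∫ t in (0:ℝ)..a, h t) - (∫ t in (0:ℝ)..b, h t)| ≤ _
    rw [hdiff]
    have := intervalIntegral.norm_integral_le_of_norm_le_const (a := b) (b := a) (C := 1)
      (f := h) (fun t _ => hb t)
    simpa using this
  · show (∫ t in (0:ℝ)..(y j), h t) - (∫ t in (0:ℝ)..(x j), h t) = _
    rw [hdiff]
    rcases le_total (x j) (y j) with hle | hle
    · rw [intervalIntegral.integral_of_le hle,
        setIntegral_congr_fun (g := fun _ => (1:ℝ)) measurableSet_Ioc]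
      · simp [abs_of_nonpos (sub_nonpos.2 hle), hle]
      · intro t ht
        simp only [h, if_pos (hcmp x y hx hy j t ht.1 ht.2)]
    · rw [intervalIntegral.integral_symm, intervalIntegral.integral_of_le hle,
        setIntegral_congr_fun (g := fun _ => (-1:ℝ)) measurableSet_Ioc]
      · simp [abs_of_nonneg (sub_nonneg.2 hle), hle]
      · intro t ht
        simp only [h, if_neg (not_lt.2 (hcmp y x hy hx j t ht.1 ht.2).le)]

open BoundedContinuousFunction in
lemma poly_net (R ε : ℝ) (hε : 0 < ε) : ∃ P : Finset (Polynomial ℝ), ∀ f : ℝ → ℝ,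
    (∀ a b, |f a - f b| ≤ |a - b|) → f 0 = 0 →
      ∃ p ∈ P, ∀ s, |s| ≤ R → |f s - p.eval s| < ε := by
  let K := Set.Icc (-R) R
  let A : Set (K →ᵇ ℝ) := {f | (∀ a b, |f a - f b| ≤ |(a:ℝ) - b|) ∧ ∀ a, |f a| ≤ R}
  have hA : IsCompact (closure A) := by
    refine arzela_ascoli (Set.Icc (-R) R) isCompact_Icc A (fun f x hf => abs_le.1 (hf.2 x)) ?_
    apply UniformEquicontinuous.equicontinuous
    apply LipschitzWith.uniformEquicontinuous _ 1
    intro f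
    refine LipschitzWith.of_dist_le_mul fun a b => ?_
    have := f.2.1 a b
    simpa [Real.dist_eq, Subtype.dist_eq] using this
  let q : Polynomial ℝ → (K →ᵇ ℝ) := fun p => mkOfCompact (p.toContinuousMapOn K)
  obtain ⟨P, hP⟩ := hA.elim_finite_subcover (fun p => Metric.ball (q p) ε)
    (fun p => Metric.isOpen_ball) (by
      intro g _
      obtain ⟨p, hp⟩ := exists_polynomial_near_continuousMap (-R) R g.toContinuousMap ε hε
      refine Set.mem_iUnion.2 ⟨p, ?_⟩
      rw [Metric.mem_ball, BoundedContinuousFunction.dist_lt_iff_of_compact hε]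
      intro s
      have := (ContinuousMap.norm_lt_iff _ hε).1 hp s
      rw [dist_comm, dist_eq_norm]
      exact this)
  refine ⟨P, fun f hf h0 => ?_⟩
  have hcont : Continuous f := by
    refine (LipschitzWith.of_dist_le_mul (K := 1) fun a b => ?_).continuous
    simpa [Real.dist_eq] using hf a b
  let g : K →ᵇ ℝ := mkOfCompact ⟨fun s => f s, by fun_prop⟩
  have hg : g ∈ A := by
    refine ⟨fun a b => hf a b, fun a => ?_⟩
    have h1 := hf a 0
    rw [h0, sub_zero, sub_zero] at h1
    exact h1.trans (abs_le.2 a.2)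
  have := hP (subset_closure hg)
  simp only [Set.mem_iUnion] at this
  obtain ⟨p, hpP, hp⟩ := this
  refine ⟨p, hpP, fun s hs => ?_⟩
  rw [Metric.mem_ball] at hp
  have := (BoundedContinuousFunction.dist_coe_le_dist (f := g) (g := q p) ⟨s, abs_le.1 hs⟩).trans_lt hp
  exact this

lemma kappa_sub {N : ℕ} (x y : Fin N → ℝ) : kappa x - kappa y = kappa (fun j => x j - y j) := by
  simp [kappa, Finset.sum_sub_distrib, sub_div]

lemma kappa_mono {N : ℕ} {x y : Fin N → ℝ} (h : ∀ j, x j ≤ y j) : kappa x ≤ kappa y := by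
  unfold kappa
  exact div_le_div_of_nonneg_right (Finset.sum_le_sum fun j _ => h j) (Nat.cast_nonneg _)

lemma kappa_mul {N : ℕ} (c : ℝ) (x : Fin N → ℝ) : kappa (fun j => c * x j) = c * kappa x := by
  simp [kappa, ← Finset.mul_sum, mul_div_assoc]

lemma kappa_sum {N : ℕ} {ι : Type*} (s : Finset ι) (x : ι → Fin N → ℝ) :
    kappa (fun j => ∑ i ∈ s, x i j) = ∑ i ∈ s, kappa (x i) := by
  simp only [kappa]
  rw [Finset.sum_comm, Finset.sum_div]

lemma kappa_abs {N : ℕ} (x : Fin N → ℝ) : |kappa x| ≤ kappa (fun j => |x j|) := by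
  unfold kappa
  rw [abs_div, Nat.abs_cast]
  exact div_le_div_of_nonneg_right (Finset.abs_sum_le_sum_abs _ _) (Nat.cast_nonneg _)

lemma kappa_const_le {N : ℕ} (c : ℝ) (hc : 0 ≤ c) : kappa (fun _ : Fin N => c) ≤ c := by
  unfold kappa
  rcases Nat.eq_zero_or_pos N with rfl | h
  · simpa using hc
  · have : (0:ℝ) < N := by exact_mod_cast h
    simp [this.ne']

lemma kappa_poly {N : ℕ} (p : Polynomial ℝ) (x : Fin N → ℝ) :
    kappa (fun j => p.eval (x j)) =
      ∑ k ∈ Finset.range (p.natDegree + 1), p.coeff k * kappa (fun j => x j ^ k) := by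
  simp only [Polynomial.eval_eq_sum_range, kappa_sum, kappa_mul]

lemma key (R ε : ℝ) (hε : 0 < ε) : ∃ (m : ℕ) (δ : ℝ), 0 < δ ∧ ∀ (N : ℕ) (x y : Fin N → ℝ),
    Monotone x → Monotone y → (∀ j, |x j| ≤ R) → (∀ j, |y j| ≤ R) →
    (∀ k, 1 ≤ k → k ≤ m → |kappa (fun j => x j ^ k) - kappa (fun j => y j ^ k)| ≤ 2 * δ) →
    kappa (fun j => |x j - y j|) ≤ ε := by
  obtain ⟨P, hP⟩ := poly_net R (ε/4) (by linarith)
  let S : Polynomial ℝ → ℝ := fun p => ∑ k ∈ Finset.range (p.natDegree + 1), |p.coeff k|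
  have hS0 : ∀ p, 0 ≤ S p := fun p => Finset.sum_nonneg fun _ _ => abs_nonneg _
  let T := ∑ p ∈ P, S p
  have hT0 : 0 ≤ T := Finset.sum_nonneg fun p _ => hS0 p
  have hST : ∀ p ∈ P, S p ≤ T := fun p hp => Finset.single_le_sum (fun p _ => hS0 p) hp
  refine ⟨P.sup Polynomial.natDegree, ε / 4 / (T + 1), by positivity,
    fun N x y hx hy hxR hyR hmom => ?_⟩
  obtain ⟨f, hf, hf0, hfj⟩ := lip_sorted x y hx hy
  obtain ⟨p, hp, hpf⟩ := hP f hf hf0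
  set d := ε / 4 / (T + 1) with hd
  have hd0 : 0 < d := by positivity
  have hdT : d * (T + 1) = ε / 4 := by rw [hd]; field_simp
  have hdeg : p.natDegree ≤ P.sup Polynomial.natDegree := Finset.le_sup (f := Polynomial.natDegree) hp
  have h1 : |kappa (fun j => p.eval (x j)) - kappa (fun j => p.eval (y j))| ≤ S p * (2 * d) := by
    rw [kappa_poly, kappa_poly, ← Finset.sum_sub_distrib, Finset.sum_mul]
    refine (Finset.abs_sum_le_sum_abs _ _).trans (Finset.sum_le_sum fun k hk => ?_)
    rw [← mul_sub, abs_mul]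
    refine mul_le_mul_of_nonneg_left ?_ (abs_nonneg _)
    rcases Nat.eq_zero_or_pos k with rfl | hk0
    · simp; positivity
    · exact hmom k hk0 ((Nat.lt_succ_iff.1 (Finset.mem_range.1 hk)).trans hdeg)
  have h2 : S p * (2 * d) ≤ ε / 2 := by nlinarith [hST p hp]
  have h3 : kappa (fun j => |x j - y j|) =
      kappa (fun j => (f (y j) - p.eval (y j)) - (f (x j) - p.eval (x j)))
      + (kappa (fun j => p.eval (y j)) - kappa (fun j => p.eval (x j))) := by
    rw [kappa_sub (fun j => p.eval (y j))]
    simp only [← hfj]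
    unfold kappa
    rw [← add_div, ← Finset.sum_add_distrib]
    congr 2
    ext j; ring
  have h4 : kappa (fun j => (f (y j) - p.eval (y j)) - (f (x j) - p.eval (x j))) ≤ ε / 2 := by
    refine (kappa_mono (y := fun _ => ε / 2) fun j => ?_).trans (kappa_const_le _ (by linarith))
    have a := (abs_lt.1 (hpf _ (hyR j))).2
    have b := (abs_lt.1 (hpf _ (hxR j))).1
    linarith
  rw [h3]
  have := (abs_le.1 h1).1
  linarith

lemma prod_diff {ι : Type*} (C : ℝ) (hC : 1 ≤ C) (a b : ι → ℝ) (ha : ∀ i, |a i| ≤ C)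
    (hb : ∀ i, |b i| ≤ C) (s : Finset ι) :
    |∏ i ∈ s, a i - ∏ i ∈ s, b i| ≤ C ^ s.card * ∑ i ∈ s, |a i - b i| := by
  induction s using Finset.induction_on with
  | empty => simp
  | insert i s his ih =>
    rw [Finset.prod_insert his, Finset.prod_insert his, Finset.sum_insert his,
      Finset.card_insert_of_notMem his]
    have hprod : |∏ j ∈ s, b j| ≤ C ^ s.card := by
      rw [Finset.abs_prod, ← Finset.prod_const]
      exact Finset.prod_le_prod (fun _ _ => abs_nonneg _) fun j _ => hb j
    have e : a i * ∏ j ∈ s, a j - b i * ∏ j ∈ s, b j =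
      a i * (∏ j ∈ s, a j - ∏ j ∈ s, b j) + (a i - b i) * ∏ j ∈ s, b j := by ring
    have hCs : (0:ℝ) ≤ C ^ s.card := by positivity
    calc _ ≤ |a i| * |∏ j ∈ s, a j - ∏ j ∈ s, b j| + |a i - b i| * |∏ j ∈ s, b j| := by
          rw [e, ← abs_mul, ← abs_mul]; exact abs_add_le _ _
      _ ≤ C * (C ^ s.card * ∑ i ∈ s, |a i - b i|) + |a i - b i| * (C * C ^ s.card) := by
          have h1 : C ^ s.card ≤ C * C ^ s.card := by nlinarith
          have := ha i
          gcongr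
          exact hprod.trans h1
      _ = _ := by ring

section
variable {Ω : Type*} [MeasurableSpace Ω] (μ : Measure Ω)
    {n : ℕ} (X : Fin n → Ω → ℝ) (R : ℝ)

lemma choose_params (m : ℕ) (δ : ℝ) (hδ : 0 < δ) : ∃ (m' : ℕ) (δ' : ℝ), 0 < δ' ∧
    ∀ N, ∀ σ ∈ DeltaSymR μ X R N m' δ', ∀ y : Fin n → Fin N → ℝ, (∀ i, Monotone (y i)) →
      (∀ i, y i ∈ DD μ X R N m' δ' i) → (fun i j => y i ((σ i)⁻¹ j)) ∈ DeltaR μ X R N m δ := by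
  set C := max R 1 with hC
  have hC1 : 1 ≤ C := le_max_right _ _
  have hCR : R ≤ C := le_max_left _ _
  have hC0 : 0 < C ^ m := by positivity
  set ε := δ / 2 / (C ^ m * (m + 1)) with hε
  have hε0 : 0 < ε := by positivity
  have hεm : C ^ m * ((m + 1) * ε) = δ / 2 := by rw [hε]; field_simp
  obtain ⟨m₁, δ₁, hδ₁, hkey⟩ := key R ε hε0
  refine ⟨max m m₁, min (δ / 2) δ₁, lt_min (by linarith) hδ₁, fun N σ hσ y hymono hy => ?_⟩
  obtain ⟨x, hxmono, hx⟩ := hσ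
  have hxb : ∀ i j, |x i j| ≤ R := fun i j => by simpa using hx.1 i (σ i j)
  have hyb : ∀ i j, |y i j| ≤ R := fun i j => (hy i).1 0 j
  have hclose : ∀ i, kappa (fun j => |x i j - y i j|) ≤ ε := by
    intro i
    refine hkey N (x i) (y i) (hxmono i) (hymono i) (hxb i) (hyb i) fun k h1 h2 => ?_
    have a := hx.2 k h1 (h2.trans (le_max_right _ _)) (fun _ => i)
    have b := (hy i).2 k h1 (h2.trans (le_max_right _ _)) (fun _ => 0)
    have e := kappa_comp (fun j => x i j ^ k) (σ i)⁻¹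
    simp only [Finset.prod_const, Finset.card_univ, Fintype.card_fin] at a b
    rw [e] at a
    have a' := abs_lt.1 (lt_of_lt_of_le a (min_le_right _ _))
    have b' := abs_lt.1 (lt_of_lt_of_le b (min_le_right _ _))
    rw [abs_le]
    constructor <;> linarith [a'.1, a'.2, b'.1, b'.2]
  refine ⟨fun i j => hyb i _, fun k h1 h2 idx => ?_⟩
  have a := lt_of_lt_of_le (hx.2 k h1 (h2.trans (le_max_left _ _)) idx) (min_le_left _ _)
  have b : |kappa (fun j => ∏ l, y (idx l) ((σ (idx l))⁻¹ j)) -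
      kappa (fun j => ∏ l, x (idx l) ((σ (idx l))⁻¹ j))| ≤ δ / 2 := by
    rw [kappa_sub]
    refine (kappa_abs _).trans ?_
    calc _ ≤ kappa (fun j => C ^ k * ∑ l, |x (idx l) ((σ (idx l))⁻¹ j) - y (idx l) ((σ (idx l))⁻¹ j)|) := by
          refine kappa_mono fun j => ?_
          rw [abs_sub_comm]
          have := prod_diff C hC1 (fun l => x (idx l) ((σ (idx l))⁻¹ j))
            (fun l => y (idx l) ((σ (idx l))⁻¹ j)) (fun l => (hxb _ _).trans hCR)
            (fun l => (hyb _ _).trans hCR) Finset.univ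
          simpa using this
      _ = C ^ k * ∑ l, kappa (fun j => |x (idx l) j - y (idx l) j|) := by
          rw [kappa_mul, kappa_sum]
          congr 2
          ext l
          exact kappa_comp (fun j => |x (idx l) j - y (idx l) j|) (σ (idx l))⁻¹
      _ ≤ C ^ m * ((m + 1) * ε) := by
          have hsum : ∑ l, kappa (fun j => |x (idx l) j - y (idx l) j|) ≤ (m + 1) * ε := by
            calc _ ≤ ∑ _l : Fin k, ε := Finset.sum_le_sum fun l _ => hclose _
              _ = k * ε := by simp
              _ ≤ _ := by
                have : (k : ℝ) ≤ m := by exact_mod_cast h2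
                gcongr; linarith
          have hpow : C ^ k ≤ C ^ m := pow_le_pow_right₀ hC1 h2
          have hnn : 0 ≤ (m + 1) * ε := by positivity
          calc _ ≤ C ^ k * ((m + 1) * ε) := by gcongr
            _ ≤ _ := by gcongr
      _ = δ / 2 := hεm
  have a' := abs_lt.1 a
  have b' := abs_le.1 b
  rw [abs_lt]
  constructor <;> linarith [a'.1, a'.2, b'.1, b'.2]

end

section
variable {Ω : Type*} [MeasurableSpace Ω] (μ : Measure Ω) [IsProbabilityMeasure μ]
    {n : ℕ} (X : Fin n → Ω → ℝ) (R : ℝ)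

lemma lln (hmeas : ∀ i, Measurable (X i)) (hbdd : ∀ i, ∀ᵐ ω ∂μ, |X i ω| ≤ R) :
    ∃ w : ℕ → Ω, (∀ i j, |X i (w j)| ≤ R) ∧ ∀ (k : ℕ) (idx : Fin k → Fin n),
      Tendsto (fun N : ℕ => (∑ j ∈ Finset.range N, ∏ l, X (idx l) (w j)) / (N : ℝ)) atTop
        (nhds (∫ ω, ∏ l, X (idx l) ω ∂μ)) := by
  let P : Measure (ℕ → Ω) := Measure.infinitePi (fun _ => μ)
  have hmp : ∀ j, MeasurePreserving (Function.eval j) P μ :=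
    fun j => measurePreserving_eval_infinitePi (fun _ : ℕ => μ) j
  have h1 : ∀ᵐ w ∂P, ∀ i j, |X i (w j)| ≤ R := by
    rw [ae_all_iff]; intro i
    rw [ae_all_iff]; intro j
    exact (hmp j).quasiMeasurePreserving.ae (hbdd i)
  have h2 : ∀ᵐ w ∂P, ∀ (k : ℕ) (idx : Fin k → Fin n),
      Tendsto (fun N : ℕ => (∑ j ∈ Finset.range N, ∏ l, X (idx l) (w j)) / (N : ℝ)) atTop
        (nhds (∫ ω, ∏ l, X (idx l) ω ∂μ)) := by
    rw [ae_all_iff]; intro k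
    rw [ae_all_iff]; intro idx
    let g : Ω → ℝ := fun ω => ∏ l, X (idx l) ω
    have hg : Measurable g := by fun_prop
    have hgint : Integrable g μ := by
      refine Integrable.of_bound hg.aestronglyMeasurable (R ^ k) ?_
      have : ∀ᵐ ω ∂μ, ∀ i, |X i ω| ≤ R := ae_all_iff.2 hbdd
      filter_upwards [this] with ω hω
      simp only [g, Real.norm_eq_abs]
      rw [Finset.abs_prod]
      calc _ ≤ ∏ _l : Fin k, R := Finset.prod_le_prod (fun _ _ => abs_nonneg _) fun l _ => hω _
        _ = _ := by simp
    have hind := ProbabilityTheory.iIndepFun_infinitePi (P := fun _ : ℕ => μ) (X := fun _ => g)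
      (fun _ => hg)
    have := ProbabilityTheory.strong_law_ae_real (μ := P) (fun j w => g (w j))
      ((hmp 0).integrable_comp_of_integrable hgint)
      (fun i j hij => hind.indepFun hij)
      (fun i => ⟨(hg.comp (measurable_pi_apply i)).aemeasurable,
        (hg.comp (measurable_pi_apply 0)).aemeasurable, by
        have a : ∀ j, Measure.map (fun w : ℕ → Ω => g (w j)) P = Measure.map g μ := by
          intro j
          rw [← (hmp j).map_eq, Measure.map_map hg (hmp j).measurable]; rfl
        rw [a, a]⟩)
    have e : ∫ w, g (w 0) ∂P = ∫ ω, g ω ∂μ := by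
      have := (hmp 0).map_eq
      rw [← this, integral_map (hmp 0).measurable.aemeasurable hg.aestronglyMeasurable]
    simp only [e] at this
    exact this
  obtain ⟨w, hw⟩ := (h1.and h2).exists
  exact ⟨w, hw.1, hw.2⟩

lemma nonempty_ev (hmeas : ∀ i, Measurable (X i)) (hbdd : ∀ i, ∀ᵐ ω ∂μ, |X i ω| ≤ R)
    (m : ℕ) (δ : ℝ) (hδ : 0 < δ) : ∀ᶠ N in atTop, (DeltaR μ X R N m δ).Nonempty := by
  obtain ⟨w, hw1, hw2⟩ := lln μ X R hmeas hbdd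
  have : ∀ᶠ N : ℕ in atTop, ∀ k ∈ Finset.range (m + 1), ∀ idx : Fin k → Fin n,
      |(∑ j ∈ Finset.range N, ∏ l, X (idx l) (w j)) / (N : ℝ) - ∫ ω, ∏ l, X (idx l) ω ∂μ| < δ := by
    rw [Filter.eventually_all_finset]
    intro k _
    rw [Filter.eventually_all]
    intro idx
    have := (hw2 k idx).eventually (Metric.ball_mem_nhds _ hδ)
    simpa [Real.dist_eq] using this
  filter_upwards [this] with N hN
  refine ⟨fun i j => X i (w j), fun i j => hw1 i j, fun k h1 h2 idx => ?_⟩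
  have := hN k (Finset.mem_range.2 (by omega)) idx
  rw [← Fin.sum_univ_eq_sum_range (fun j => ∏ l, X (idx l) (w j))] at this
  exact this

end

section
variable {Ω : Type*} [MeasurableSpace Ω] (μ : Measure Ω)
    {n : ℕ} (X : Fin n → Ω → ℝ) (R : ℝ)

lemma vol_pos_of_nonempty (hR : 0 < R) (N m : ℕ) (δ : ℝ) (h : (DeltaR μ X R N m δ).Nonempty) :
    0 < volume (DeltaR μ X R N m δ) := by
  obtain ⟨x, hx1, hx2⟩ := h
  let U : Set (Fin n → Fin N → ℝ) := ⋂ k ∈ Finset.Icc 1 m, ⋂ idx : Fin k → Fin n,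
      {x | |kappa (fun j => ∏ l, x (idx l) j) - ∫ ω, ∏ l, X (idx l) ω ∂μ| < δ}
  have hU : IsOpen U := by
    refine isOpen_biInter_finset fun k _ => isOpen_iInter_of_finite fun idx => ?_
    refine isOpen_lt ?_ continuous_const
    unfold kappa
    fun_prop
  have hxU : x ∈ U := by
    simp only [U, Set.mem_iInter]
    intro k hk idx
    rw [Finset.mem_Icc] at hk
    exact hx2 k hk.1 hk.2 idx
  have hxb : x ∈ closure (Metric.ball (0 : Fin n → Fin N → ℝ) R) := by
    rw [closure_ball _ hR.ne', mem_closedBall_zero_iff, pi_norm_le_iff_of_nonneg hR.le]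
    intro i
    rw [pi_norm_le_iff_of_nonneg hR.le]
    exact fun j => hx1 i j
  obtain ⟨z, hz⟩ := mem_closure_iff.1 hxb U hU hxU
  refine lt_of_lt_of_le ((hU.inter Metric.isOpen_ball).measure_pos volume ⟨z, hz⟩)
    (measure_mono fun y hy => ?_)
  refine ⟨fun i j => ?_, fun k h1 h2 idx => ?_⟩
  · have := hy.2
    rw [mem_ball_zero_iff] at this
    exact ((norm_le_pi_norm (y i) j).trans (norm_le_pi_norm y i)).trans this.le
  · have := hy.1
    simp only [U, Set.mem_iInter] at this
    exact this k (Finset.mem_Icc.2 ⟨h1, h2⟩) idx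

lemma vol_le (hR : 0 ≤ R) (N m : ℕ) (δ : ℝ) :
    volume (DeltaR μ X R N m δ) ≤ ENNReal.ofReal ((2 * R) ^ (N * n)) := by
  calc _ ≤ volume (Set.pi Set.univ (fun _ : Fin n => Set.pi Set.univ
        (fun _ : Fin N => Set.Icc (-R) R))) := by
        refine measure_mono fun x hx => ?_
        intro i _ j _
        exact abs_le.1 (hx.1 i j)
    _ = _ := by
        simp only [volume_pi_pi, Real.volume_Icc, Finset.prod_const, Finset.card_univ, Fintype.card_fin]
        rw [← pow_mul, ENNReal.ofReal_pow (by linarith)]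
        congr 2; ring

/-- good: eventually nondegenerate volume. -/
def Good : Prop := ∀ (m : ℕ) (δ : ℝ), 0 < δ → ∀ᶠ N in atTop, 0 < volume (DeltaR μ X R N m δ)

lemma vol_lt_top (N m : ℕ) (δ : ℝ) : volume (DeltaR μ X R N m δ) < ⊤ := by
  refine lt_of_le_of_lt (measure_mono fun x hx => ?_)
    ((vol_le μ X |R| (abs_nonneg R) N 0 1).trans_lt ENNReal.ofReal_lt_top)
  exact ⟨fun i j => (hx.1 i j).trans (le_abs_self R), fun k h1 h2 => by omega⟩

lemma volQ_le (hR : 0 ≤ R) : ∃ c : ℝ, ∀ N m δ, volQ μ X R N m δ ≤ c := by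
  refine ⟨max 0 (n * Real.log (2 * R)), fun N m δ => ?_⟩
  unfold volQ
  rcases Nat.eq_zero_or_pos N with rfl | hN
  · simp
  have hN' : (0:ℝ) < N := by exact_mod_cast hN
  rcases eq_or_ne (volume (DeltaR μ X R N m δ)).toReal 0 with h | h
  · rw [h]; simp
  · have hpos : 0 < (volume (DeltaR μ X R N m δ)).toReal := lt_of_le_of_ne ENNReal.toReal_nonneg h.symm
    have h1 : (volume (DeltaR μ X R N m δ)).toReal ≤ (2 * R) ^ (N * n) := by
      have := ENNReal.toReal_mono ENNReal.ofReal_ne_top (vol_le μ X R hR N m δ)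
      rwa [ENNReal.toReal_ofReal (by positivity)] at this
    refine le_max_of_le_right ?_
    rw [div_le_iff₀ hN']
    refine (Real.log_le_log hpos h1).trans (le_of_eq ?_)
    rw [Real.log_pow]; push_cast; ring

lemma card_le (N m : ℕ) (δ : ℝ) : Nat.card (DeltaSymR μ X R N m δ) ≤ N.factorial ^ n := by
  have := Nat.card_le_card_of_injective (Subtype.val : DeltaSymR μ X R N m δ → _)
    Subtype.val_injective
  simpa [Nat.card_eq_fintype_card, Fintype.card_perm] using this

lemma symQ_le (N m : ℕ) (δ : ℝ) : symQ μ X R N m δ ≤ 0 := by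
  unfold symQ
  refine div_nonpos_of_nonpos_of_nonneg (Real.log_nonpos (by positivity) ?_) (Nat.cast_nonneg _)
  refine div_le_one_of_le₀ ?_ (by positivity)
  exact_mod_cast card_le μ X R N m δ

lemma pos_of_vol_pos {N m : ℕ} {δ : ℝ} (h : 0 < volume (DeltaR μ X R N m δ)) :
    0 < Nat.card (DeltaSymR μ X R N m δ) ∧
      ∀ i, 0 < volume (DeltaR μ (fun _ : Fin 1 => X i) R N m δ) := by
  have hu := upper_vol μ X R N m δ
  have hf : (N.factorial : ℝ≥0∞) ^ n ≠ 0 :=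
    pow_ne_zero _ (Nat.cast_ne_zero.2 (Nat.factorial_ne_zero N))
  have h1 := (ENNReal.mul_pos h.ne' hf).trans_le hu
  have h2 := h1.ne'
  rw [mul_ne_zero_iff, Finset.prod_ne_zero_iff] at h2
  refine ⟨Nat.pos_of_ne_zero (by exact_mod_cast h2.1), fun i => pos_iff_ne_zero.2 (h2.2 i (Finset.mem_univ i))⟩

lemma log_form {N m : ℕ} {δ : ℝ} (hS : 0 < Nat.card (DeltaSymR μ X R N m δ))
    (hV : ∀ i, 0 < volume (DeltaR μ (fun _ : Fin 1 => X i) R N m δ)) :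
    symQ μ X R N m δ + ∑ i, volQ μ (fun _ : Fin 1 => X i) R N m δ =
      Real.log (((Nat.card (DeltaSymR μ X R N m δ) : ℝ≥0∞) *
        ∏ i, volume (DeltaR μ (fun _ : Fin 1 => X i) R N m δ)).toReal / (N.factorial : ℝ) ^ n) / N := by
  have hV' : ∀ i, (volume (DeltaR μ (fun _ : Fin 1 => X i) R N m δ)).toReal ≠ 0 :=
    fun i => (ENNReal.toReal_pos (hV i).ne' (vol_lt_top _ _ _ _ _ _).ne).ne'
  have hS' : (Nat.card (DeltaSymR μ X R N m δ) : ℝ) ≠ 0 := by exact_mod_cast hS.ne'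
  have hf : (N.factorial : ℝ) ^ n ≠ 0 := by positivity
  unfold symQ volQ
  rw [← Finset.sum_div, ← add_div, ← Real.log_prod (fun i _ => hV' i), ← Real.log_mul
    (div_ne_zero hS' hf) (Finset.prod_ne_zero_iff.2 fun i _ => hV' i)]
  rw [ENNReal.toReal_mul, ENNReal.toReal_prod, ENNReal.toReal_natCast]
  congr 2
  ring

lemma upper_ev (hg : Good μ X R) (m : ℕ) (δ : ℝ) (hδ : 0 < δ) : ∀ᶠ N in atTop,
    volQ μ X R N m δ ≤ symQ μ X R N m δ + ∑ i, volQ μ (fun _ : Fin 1 => X i) R N m δ := by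
  filter_upwards [hg m δ hδ] with N hN
  obtain ⟨h1, h2⟩ := pos_of_vol_pos μ X R hN
  rw [log_form μ X R h1 h2]
  unfold volQ
  have hpos := ENNReal.toReal_pos hN.ne' (vol_lt_top μ X R N m δ).ne
  refine div_le_div_of_nonneg_right (Real.log_le_log hpos ?_) (Nat.cast_nonneg _)
  rw [le_div_iff₀ (by positivity)]
  have := ENNReal.toReal_mono ?_ (upper_vol μ X R N m δ)
  · simpa using this
  · exact ENNReal.mul_ne_top (by simp) (ENNReal.prod_ne_top fun i _ => (vol_lt_top _ _ _ _ _ _).ne)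

lemma lower_ev (hg : Good μ X R) (m : ℕ) (δ : ℝ) (hδ : 0 < δ) : ∃ m' δ', 0 < δ' ∧ ∀ᶠ N in atTop,
    symQ μ X R N m' δ' + ∑ i, volQ μ (fun _ : Fin 1 => X i) R N m' δ' ≤ volQ μ X R N m δ := by
  obtain ⟨m', δ', hδ', hsub⟩ := choose_params μ X R m δ hδ
  refine ⟨m', δ', hδ', ?_⟩
  filter_upwards [hg m' δ' hδ'] with N hN
  obtain ⟨h1, h2⟩ := pos_of_vol_pos μ X R hN
  rw [log_form μ X R h1 h2]
  unfold volQ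
  have hne : ((Nat.card (DeltaSymR μ X R N m' δ') : ℝ≥0∞) *
        ∏ i, volume (DeltaR μ (fun _ : Fin 1 => X i) R N m' δ')) ≠ ⊤ :=
    ENNReal.mul_ne_top (by simp) (ENNReal.prod_ne_top fun i _ => (vol_lt_top _ _ _ _ _ _).ne)
  have hne0 : ((Nat.card (DeltaSymR μ X R N m' δ') : ℝ≥0∞) *
        ∏ i, volume (DeltaR μ (fun _ : Fin 1 => X i) R N m' δ')) ≠ 0 :=
    mul_ne_zero (by exact_mod_cast h1.ne') (Finset.prod_ne_zero_iff.2 fun i _ => (h2 i).ne')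
  have hpos := ENNReal.toReal_pos hne0 hne
  refine div_le_div_of_nonneg_right (Real.log_le_log (by positivity) ?_) (Nat.cast_nonneg _)
  rw [div_le_iff₀ (by positivity)]
  have := ENNReal.toReal_mono ?_ (lower_vol μ X R N m δ m' δ' (hsub N))
  · simpa using this
  · exact ENNReal.mul_ne_top (vol_lt_top _ _ _ _ _ _).ne (by simp)

lemma DeltaR_mono {N m m' : ℕ} {δ δ' : ℝ} (hm : m ≤ m') (hd : δ' ≤ δ) :
    DeltaR μ X R N m' δ' ⊆ DeltaR μ X R N m δ :=
  fun _ hx => ⟨hx.1, fun k h1 h2 idx => (hx.2 k h1 (h2.trans hm) idx).trans_le hd⟩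

lemma volQ_mono (hg : Good μ X R) {m m' : ℕ} {δ δ' : ℝ} (hm : m ≤ m') (hd : δ' ≤ δ) (h0 : 0 < δ') :
    ∀ᶠ N in atTop, volQ μ X R N m' δ' ≤ volQ μ X R N m δ := by
  filter_upwards [hg m' δ' h0] with N hN
  unfold volQ
  refine div_le_div_of_nonneg_right (Real.log_le_log
    (ENNReal.toReal_pos hN.ne' (vol_lt_top _ _ _ _ _ _).ne) ?_) (Nat.cast_nonneg _)
  exact ENNReal.toReal_mono (vol_lt_top _ _ _ _ _ _).ne (measure_mono (DeltaR_mono μ X R hm hd))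

lemma symQ_mono (hg : Good μ X R) {m m' : ℕ} {δ δ' : ℝ} (hm : m ≤ m') (hd : δ' ≤ δ) (h0 : 0 < δ') :
    ∀ᶠ N in atTop, symQ μ X R N m' δ' ≤ symQ μ X R N m δ := by
  filter_upwards [hg m' δ' h0] with N hN
  obtain ⟨h1, -⟩ := pos_of_vol_pos μ X R hN
  unfold symQ
  have h1' : (0:ℝ) < Nat.card (DeltaSymR μ X R N m' δ') := by exact_mod_cast h1
  refine div_le_div_of_nonneg_right (Real.log_le_log (by positivity) ?_) (Nat.cast_nonneg _)
  refine div_le_div_of_nonneg_right ?_ (by positivity)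
  have hsub : DeltaSymR μ X R N m' δ' ⊆ DeltaSymR μ X R N m δ :=
    fun σ ⟨x, h1, h2⟩ => ⟨x, h1, DeltaR_mono μ X R hm hd h2⟩
  exact_mod_cast Nat.card_mono (Set.toFinite _) hsub

end

lemma tendsto_params (F : ℕ → ℝ → EReal)
    (hF : ∀ m m' δ δ', m ≤ m' → δ' ≤ δ → 0 < δ' → F m' δ' ≤ F m δ) :
    Tendsto (fun p : ℕ => F p (1 / ((p:ℝ) + 1))) atTop
      (nhds (⨅ (m : ℕ) (δ : ℝ) (_ : 0 < δ), F m δ)) := by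
  have hanti : Antitone (fun p : ℕ => F p (1 / ((p:ℝ) + 1))) := by
    intro p q hpq
    refine hF _ _ _ _ hpq ?_ (by positivity)
    have : (p:ℝ) ≤ q := by exact_mod_cast hpq
    gcongr
  have := tendsto_atTop_iInf hanti
  convert this using 2
  apply le_antisymm
  · refine le_iInf fun p => ?_
    exact (iInf_le _ p).trans ((iInf_le _ (1 / ((p:ℝ) + 1))).trans (iInf_le _ (by positivity)))
  · refine le_iInf fun m => le_iInf fun δ => le_iInf fun hδ => ?_
    obtain ⟨q, hq⟩ := exists_nat_one_div_lt hδ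
    refine (iInf_le _ (max m q)).trans (hF _ _ _ _ (le_max_left _ _) ?_ (by positivity))
    refine le_trans ?_ hq.le
    have : (q:ℝ) ≤ (max m q : ℕ) := by exact_mod_cast le_max_right _ _
    gcongr

lemma sum_ne_top {ι : Type*} (s : Finset ι) (B : ι → EReal) (h : ∀ i, B i ≠ ⊤) :
    ∑ i ∈ s, B i ≠ ⊤ := by
  induction s using Finset.induction_on with
  | empty => simp
  | insert i s his ih => rw [Finset.sum_insert his]; exact EReal.add_ne_top (h i) ih

lemma coe_sum {ι : Type*} (s : Finset ι) (b : ι → ℝ) :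
    ((∑ i ∈ s, b i : ℝ) : EReal) = ∑ i ∈ s, (b i : EReal) := by
  induction s using Finset.induction_on with
  | empty => simp
  | insert i s his ih => rw [Finset.sum_insert his, Finset.sum_insert his, EReal.coe_add, ih]

lemma tendsto_sum {ι : Type*} (s : Finset ι) (b : ι → ℕ → EReal) (B : ι → EReal)
    (hB : ∀ i, B i ≠ ⊤) (h : ∀ i, Tendsto (b i) atTop (nhds (B i))) :
    Tendsto (fun p => ∑ i ∈ s, b i p) atTop (nhds (∑ i ∈ s, B i)) := by
  induction s using Finset.induction_on with
  | empty => simp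
  | insert i s his ih =>
    simp only [Finset.sum_insert his]
    exact (EReal.continuousAt_add (p := (B i, ∑ i ∈ s, B i)) (.inl (hB i))
      (.inr (sum_ne_top s B hB))).tendsto.comp ((h i).prodMk_nhds ih)

lemma limsup_ne_top {u : ℕ → ℝ} {c : ℝ} (h : ∀ N, u N ≤ c) :
    limsup (fun N => (u N : EReal)) atTop ≤ c :=
  limsup_le_of_le (by isBoundedDefault) (Filter.Eventually.of_forall fun N => by exact_mod_cast h N)

lemma limsup_sum_le {ι : Type*} (s : Finset ι) (b : ι → ℕ → ℝ) (c : ι → ℝ) (h : ∀ i N, b i N ≤ c i) :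
    limsup (fun N => ((∑ i ∈ s, b i N : ℝ) : EReal)) atTop ≤
      ∑ i ∈ s, limsup (fun N => (b i N : EReal)) atTop := by
  have hne : ∀ i, limsup (fun N => (b i N : EReal)) atTop ≠ ⊤ := fun i =>
    ((limsup_ne_top (h i)).trans_lt (EReal.coe_lt_top _)).ne
  induction s using Finset.induction_on with
  | empty => simp
  | insert i s his ih =>
    simp only [Finset.sum_insert his, EReal.coe_add]
    refine le_trans (EReal.limsup_add_le (u := fun N => (b i N : EReal))
      (v := fun N => ((∑ i ∈ s, b i N : ℝ) : EReal)) (.inr ?_) (.inl (hne i))) (add_le_add le_rfl ih)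
    exact (ih.trans_lt (lt_top_iff_ne_top.2 (sum_ne_top s _ hne))).ne

lemma le_liminf_sum {ι : Type*} (s : Finset ι) (b : ι → ℕ → ℝ) :
    ∑ i ∈ s, liminf (fun N => (b i N : EReal)) atTop ≤
      liminf (fun N => ((∑ i ∈ s, b i N : ℝ) : EReal)) atTop := by
  induction s using Finset.induction_on with
  | empty => simp
  | insert i s his ih =>
    simp only [Finset.sum_insert his, EReal.coe_add]
    exact (add_le_add le_rfl ih).trans (EReal.le_liminf_add (u := fun N => (b i N : EReal))
      (v := fun N => ((∑ i ∈ s, b i N : ℝ) : EReal)))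

lemma limsup_mono' {u v : ℕ → ℝ} (h : ∀ᶠ N in atTop, u N ≤ v N) :
    limsup (fun N => (u N : EReal)) atTop ≤ limsup (fun N => (v N : EReal)) atTop :=
  limsup_le_limsup (h.mono fun N hN => EReal.coe_le_coe_iff.2 hN)

lemma liminf_mono' {u v : ℕ → ℝ} (h : ∀ᶠ N in atTop, u N ≤ v N) :
    liminf (fun N => (u N : EReal)) atTop ≤ liminf (fun N => (v N : EReal)) atTop :=
  liminf_le_liminf (h.mono fun N hN => EReal.coe_le_coe_iff.2 hN)

lemma abstract_main {n : ℕ} (v s : ℕ → ℝ → ℕ → ℝ) (b : Fin n → ℕ → ℝ → ℕ → ℝ)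
    (hup : ∀ m δ, 0 < δ → ∀ᶠ N in atTop, v m δ N ≤ s m δ N + ∑ i, b i m δ N)
    (hlow : ∀ m δ, 0 < δ → ∃ m' δ', 0 < δ' ∧ ∀ᶠ N in atTop,
      s m' δ' N + ∑ i, b i m' δ' N ≤ v m δ N)
    (hs : ∀ m m' δ δ', m ≤ m' → δ' ≤ δ → 0 < δ' → ∀ᶠ N in atTop, s m' δ' N ≤ s m δ N)
    (hb : ∀ i, ∀ m m' δ δ', m ≤ m' → δ' ≤ δ → 0 < δ' → ∀ᶠ N in atTop, b i m' δ' N ≤ b i m δ N)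
    (hs0 : ∀ m δ N, s m δ N ≤ 0) (c : Fin n → ℝ) (hbc : ∀ i m δ N, b i m δ N ≤ c i)
    (H : EReal) (B : Fin n → EReal)
    (hH1 : H = ⨅ (m : ℕ) (δ : ℝ) (_ : 0 < δ), limsup (fun N => (v m δ N : EReal)) atTop)
    (hH2 : H = ⨅ (m : ℕ) (δ : ℝ) (_ : 0 < δ), liminf (fun N => (v m δ N : EReal)) atTop)
    (hB1 : ∀ i, B i = ⨅ (m : ℕ) (δ : ℝ) (_ : 0 < δ), limsup (fun N => (b i m δ N : EReal)) atTop)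
    (hB2 : ∀ i, B i = ⨅ (m : ℕ) (δ : ℝ) (_ : 0 < δ), liminf (fun N => (b i m δ N : EReal)) atTop) :
    H = (⨅ (m : ℕ) (δ : ℝ) (_ : 0 < δ), limsup (fun N => (s m δ N : EReal)) atTop) + ∑ i, B i ∧
    H = (⨅ (m : ℕ) (δ : ℝ) (_ : 0 < δ), liminf (fun N => (s m δ N : EReal)) atTop) + ∑ i, B i ∧
    (⨅ (m : ℕ) (δ : ℝ) (_ : 0 < δ), limsup (fun N => (s m δ N : EReal)) atTop) ≠ ⊤ ∧
    (⨅ (m : ℕ) (δ : ℝ) (_ : 0 < δ), liminf (fun N => (s m δ N : EReal)) atTop) ≠ ⊤ ∧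
    ∑ i, B i ≠ ⊤ := by
  set A := (⨅ (m : ℕ) (δ : ℝ) (_ : 0 < δ), limsup (fun N => (s m δ N : EReal)) atTop) with hA
  set A' := (⨅ (m : ℕ) (δ : ℝ) (_ : 0 < δ), liminf (fun N => (s m δ N : EReal)) atTop) with hA'
  have inf_le : ∀ (F : ℕ → ℝ → EReal) m δ, 0 < δ → (⨅ (m : ℕ) (δ : ℝ) (_ : 0 < δ), F m δ) ≤ F m δ :=
    fun F m δ hδ => (iInf_le _ m).trans ((iInf_le _ δ).trans (iInf_le _ hδ))
  have hls : ∀ m δ, limsup (fun N => (s m δ N : EReal)) atTop ≠ ⊤ := fun m δ =>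
    ((limsup_ne_top (hs0 m δ)).trans_lt (EReal.coe_lt_top _)).ne
  have hli : ∀ m δ, liminf (fun N => (s m δ N : EReal)) atTop ≠ ⊤ := fun m δ =>
    ((liminf_le_limsup).trans_lt (lt_top_iff_ne_top.2 (hls m δ))).ne
  have hlb : ∀ i m δ, limsup (fun N => (b i m δ N : EReal)) atTop ≠ ⊤ := fun i m δ =>
    ((limsup_ne_top (hbc i m δ)).trans_lt (EReal.coe_lt_top _)).ne
  have hAt : A ≠ ⊤ := ((inf_le (fun m δ => limsup (fun N => (s m δ N : EReal)) atTop) 0 1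
    one_pos).trans_lt (lt_top_iff_ne_top.2 (hls 0 1))).ne
  have hAt' : A' ≠ ⊤ := ((inf_le (fun m δ => liminf (fun N => (s m δ N : EReal)) atTop) 0 1
    one_pos).trans_lt (lt_top_iff_ne_top.2 (hli 0 1))).ne
  have hBt : ∀ i, B i ≠ ⊤ := fun i => by
    rw [hB1 i]
    exact ((inf_le (fun m δ => limsup (fun N => (b i m δ N : EReal)) atTop) 0 1
      one_pos).trans_lt (lt_top_iff_ne_top.2 (hlb i 0 1))).ne
  have hSBt : ∑ i, B i ≠ ⊤ := sum_ne_top _ B hBt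
  have hlsb : ∀ m δ, limsup (fun N => ((∑ i, b i m δ N : ℝ) : EReal)) atTop ≤
      ∑ i, limsup (fun N => (b i m δ N : EReal)) atTop := fun m δ =>
    limsup_sum_le Finset.univ (fun i => b i m δ) c (fun i N => hbc i m δ N)
  have hlsbt : ∀ m δ, limsup (fun N => ((∑ i, b i m δ N : ℝ) : EReal)) atTop ≠ ⊤ := fun m δ =>
    ((hlsb m δ).trans_lt (lt_top_iff_ne_top.2 (sum_ne_top _ _ fun i => hlb i m δ))).ne
  -- convergence
  have tA := tendsto_params (fun m δ => limsup (fun N => (s m δ N : EReal)) atTop)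
    (fun m m' δ δ' h1 h2 h3 => limsup_mono' (hs m m' δ δ' h1 h2 h3))
  have tA' := tendsto_params (fun m δ => liminf (fun N => (s m δ N : EReal)) atTop)
    (fun m m' δ δ' h1 h2 h3 => liminf_mono' (hs m m' δ δ' h1 h2 h3))
  have tB : ∀ i, Tendsto (fun p : ℕ => limsup (fun N => (b i p (1 / ((p:ℝ) + 1)) N : EReal)) atTop)
      atTop (nhds (B i)) := fun i => by
    rw [hB1 i]
    exact tendsto_params (fun m δ => limsup (fun N => (b i m δ N : EReal)) atTop)
      (fun m m' δ δ' h1 h2 h3 => limsup_mono' (hb i m m' δ δ' h1 h2 h3))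
  have tSB := tendsto_sum Finset.univ _ B hBt tB
  have tsum := (EReal.continuousAt_add (p := (A, ∑ i, B i)) (.inl hAt) (.inr hSBt)).tendsto.comp
    (tA.prodMk_nhds tSB)
  have tsum' := (EReal.continuousAt_add (p := (A', ∑ i, B i)) (.inl hAt') (.inr hSBt)).tendsto.comp
    (tA'.prodMk_nhds tSB)
  have up1 : H ≤ A + ∑ i, B i := by
    refine ge_of_tendsto' tsum fun p => ?_
    have hp : (0:ℝ) < 1 / ((p:ℝ) + 1) := by positivity
    rw [hH1]
    refine (inf_le (fun m δ => limsup (fun N => (v m δ N : EReal)) atTop) p _ hp).trans ?_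
    refine (limsup_mono' (hup p _ hp)).trans ?_
    simp only [EReal.coe_add]
    exact (EReal.limsup_add_le (u := fun N => (s p (1 / ((p:ℝ) + 1)) N : EReal))
      (v := fun N => ((∑ i, b i p (1 / ((p:ℝ) + 1)) N : ℝ) : EReal))
      (.inr (hlsbt _ _)) (.inl (hls _ _))).trans (add_le_add le_rfl (hlsb _ _))
  have up2 : H ≤ A' + ∑ i, B i := by
    refine ge_of_tendsto' tsum' fun p => ?_
    have hp : (0:ℝ) < 1 / ((p:ℝ) + 1) := by positivity
    rw [hH2]
    refine (inf_le (fun m δ => liminf (fun N => (v m δ N : EReal)) atTop) p _ hp).trans ?_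
    refine (liminf_mono' (hup p _ hp)).trans ?_
    simp only [EReal.coe_add, add_comm (s _ _ _ : EReal)]
    refine (EReal.liminf_add_le (v := fun N => (s p (1 / ((p:ℝ) + 1)) N : EReal))
      (u := fun N => ((∑ i, b i p (1 / ((p:ℝ) + 1)) N : ℝ) : EReal))
      (.inr (hli _ _)) (.inl (hlsbt _ _))).trans ?_
    rw [add_comm]
    exact add_le_add le_rfl (hlsb _ _)
  have hBle : ∀ m δ, 0 < δ → ∑ i, B i ≤ liminf (fun N => ((∑ i, b i m δ N : ℝ) : EReal)) atTop := by
    intro m δ hδ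
    refine le_trans (Finset.sum_le_sum fun i _ => ?_) (le_liminf_sum Finset.univ (fun i => b i m δ))
    rw [hB2 i]
    exact inf_le (fun m δ => liminf (fun N => (b i m δ N : EReal)) atTop) m δ hδ
  have low1 : A + ∑ i, B i ≤ H := by
    rw [hH1]
    refine le_iInf fun m => le_iInf fun δ => le_iInf fun hδ => ?_
    obtain ⟨m', δ', hδ', hl⟩ := hlow m δ hδ
    refine le_trans ?_ (limsup_mono' hl)
    simp only [EReal.coe_add]
    refine (add_le_add (inf_le (fun m δ => limsup (fun N => (s m δ N : EReal)) atTop) m' δ' hδ')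
      (hBle m' δ' hδ')).trans ?_
    exact EReal.le_limsup_add (u := fun N => (s m' δ' N : EReal))
      (v := fun N => ((∑ i, b i m' δ' N : ℝ) : EReal))
  have low2 : A' + ∑ i, B i ≤ H := by
    rw [hH2]
    refine le_iInf fun m => le_iInf fun δ => le_iInf fun hδ => ?_
    obtain ⟨m', δ', hδ', hl⟩ := hlow m δ hδ
    refine le_trans ?_ (liminf_mono' hl)
    simp only [EReal.coe_add]
    refine (add_le_add (inf_le (fun m δ => liminf (fun N => (s m δ N : EReal)) atTop) m' δ' hδ')
      (hBle m' δ' hδ')).trans ?_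
    exact EReal.le_liminf_add (u := fun N => (s m' δ' N : EReal))
      (v := fun N => ((∑ i, b i m' δ' N : ℝ) : EReal))
  exact ⟨le_antisymm up1 low1, le_antisymm up2 low2, hAt, hAt', hSBt⟩

lemma good_of_pos {Ω : Type*} [MeasurableSpace Ω] (μ : Measure Ω) [IsProbabilityMeasure μ]
    {n : ℕ} (X : Fin n → Ω → ℝ) (R : ℝ) (hR : 0 < R)
    (hmeas : ∀ i, Measurable (X i)) (hbdd : ∀ i, ∀ᵐ ω ∂μ, |X i ω| ≤ R) : Good μ X R :=
  fun m δ hδ => (nonempty_ev μ X R hmeas hbdd m δ hδ).mono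
    fun N hN => vol_pos_of_nonempty μ X R hR N m δ hN

lemma good_zero {Ω : Type*} [MeasurableSpace Ω] (μ : Measure Ω)
    (X : Fin 0 → Ω → ℝ) (R : ℝ) : Good μ X R := by
  intro m δ hδ
  refine Filter.Eventually.of_forall fun N => ?_
  have : DeltaR μ X R N m δ = Set.univ := by
    refine Set.eq_univ_of_forall fun x => ⟨fun i => i.elim0, fun k h1 h2 idx => ?_⟩
    exact (idx ⟨0, h1⟩).elim0
  rw [this]
  exact isOpen_univ.measure_pos volume Set.univ_nonempty

lemma R_pos {Ω : Type*} [MeasurableSpace Ω] (μ : Measure Ω) [IsProbabilityMeasure μ]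
    {n : ℕ} (hn : n ≠ 0) (X : Fin n → Ω → ℝ) (R : ℝ)
    (hmeas : ∀ i, Measurable (X i)) (hbdd : ∀ i, ∀ᵐ ω ∂μ, |X i ω| ≤ R)
    (hvol : MicrostateVolumeFormula μ X R) : 0 < R := by
  have i0 : Fin n := ⟨0, Nat.pos_of_ne_zero hn⟩
  have hR0 : 0 ≤ R := by
    obtain ⟨ω, hω⟩ := (hbdd i0).exists
    exact (abs_nonneg _).trans hω
  rcases hR0.lt_or_eq with h | h
  · exact h
  exfalso
  subst h
  have hz : ∀ᵐ ω ∂μ, (fun i => X i ω) = (0 : Fin n → ℝ) := by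
    filter_upwards [ae_all_iff.2 hbdd] with ω hω
    funext i
    exact abs_nonpos_iff.1 (hω i)
  haveI : Nonempty (Fin n) := ⟨i0⟩
  have hH : diffEntropy volume (Measure.map (fun ω (i : Fin n) => X i ω) μ) = ⊥ := by
    unfold diffEntropy
    rw [if_neg]
    intro hac
    have h1 := hac (s := {0}) (by simp)
    rw [Measure.map_apply (measurable_pi_lambda _ hmeas) (measurableSet_singleton _)] at h1
    have h2 : μ ((fun ω (i : Fin n) => X i ω) ⁻¹' {0}) = 1 := by
      have h3 : ((fun ω (i : Fin n) => X i ω) ⁻¹' {0}) =ᵐ[μ] Set.univ := by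
        filter_upwards [hz] with ω hω
        apply propext
        exact ⟨fun _ => trivial, fun _ => hω⟩
      rw [measure_congr h3, measure_univ]
    rw [h1] at h2
    exact zero_ne_one h2
  have h2 := hvol.1
  rw [hH] at h2
  have h3 : (0 : EReal) ≤ ⨅ (m : ℕ) (δ : ℝ) (_ : 0 < δ),
          Filter.limsup (fun N : ℕ => ((volQ μ X 0 N m δ : ℝ) : EReal)) atTop := by
    refine le_iInf fun m => le_iInf fun δ => le_iInf fun hδ => ?_
    have : (fun N : ℕ => ((volQ μ X 0 N m δ : ℝ) : EReal)) = fun _ => 0 := by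
      funext N
      rcases Nat.eq_zero_or_pos N with rfl | hN
      · simp [volQ]
      have h0 : volume (DeltaR μ X 0 N m δ) = 0 := by
        have := vol_le μ X 0 le_rfl N m δ
        have hne : N * n ≠ 0 := Nat.mul_ne_zero hN.ne' hn
        simpa [hne] using this
      simp [volQ, h0]
    rw [this]; simp
  rw [← h2] at h3
  simp at h3

end Aux

/-- Theorem 1.6: `H(X₁,…,Xₙ) = -I_sym + ∑ᵢ H(Xᵢ) = -Ī_sym + ∑ᵢ H(Xᵢ)`; in
particular `I_sym = Ī_sym` when `∑ᵢ H(Xᵢ)` is finite or `H(X₁,…,Xₙ) > -∞`. -/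
theorem stmt10 {Ω : Type*} [MeasurableSpace Ω] (μ : Measure Ω)
    [IsProbabilityMeasure μ] (n : ℕ) (X : Fin n → Ω → ℝ)
    (hmeas : ∀ i, Measurable (X i)) (R : ℝ)
    (hbdd : ∀ i, ∀ᵐ ω ∂μ, |X i ω| ≤ R)
    (hvol : MicrostateVolumeFormula μ X R)
    (hvoli : ∀ i, MicrostateVolumeFormula μ (fun _ : Fin 1 => X i) R) :
    diffEntropy volume (Measure.map (fun ω (i : Fin n) => X i ω) μ)
        = -Isym μ X R + ∑ i, diffEntropy volume
            (Measure.map (fun ω (_ : Fin 1) => X i ω) μ) ∧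
    diffEntropy volume (Measure.map (fun ω (i : Fin n) => X i ω) μ)
        = -IsymUpper μ X R + ∑ i, diffEntropy volume
            (Measure.map (fun ω (_ : Fin 1) => X i ω) μ) ∧
    (((∑ i, diffEntropy volume (Measure.map (fun ω (_ : Fin 1) => X i ω) μ)) ≠ ⊥ ∧
      (∑ i, diffEntropy volume (Measure.map (fun ω (_ : Fin 1) => X i ω) μ)) ≠ ⊤) ∨
      diffEntropy volume (Measure.map (fun ω (i : Fin n) => X i ω) μ) ≠ ⊥ →
      Isym μ X R = IsymUpper μ X R) := by
  have hg : Aux.Good μ X R := by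
    rcases Nat.eq_zero_or_pos n with rfl | hn
    · exact Aux.good_zero μ X R
    · exact Aux.good_of_pos μ X R (Aux.R_pos μ hn.ne' X R hmeas hbdd hvol) hmeas hbdd
  have hRi : Fin n → 0 < R := fun i =>
    Aux.R_pos μ (Fin.pos i).ne' X R hmeas hbdd hvol
  have hgi : ∀ i, Aux.Good μ (fun _ : Fin 1 => X i) R := fun i =>
    Aux.good_of_pos μ _ R (hRi i) (fun _ => hmeas i) (fun _ => hbdd i)
  choose c hc using fun i => Aux.volQ_le μ (fun _ : Fin 1 => X i) R (hRi i).le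
  obtain ⟨h1, h2, h3, h4, h5⟩ := Aux.abstract_main
    (fun m δ N => volQ μ X R N m δ) (fun m δ N => symQ μ X R N m δ)
    (fun i m δ N => volQ μ (fun _ : Fin 1 => X i) R N m δ)
    (fun m δ hδ => Aux.upper_ev μ X R hg m δ hδ)
    (fun m δ hδ => Aux.lower_ev μ X R hg m δ hδ)
    (fun m m' δ δ' a b d => Aux.symQ_mono μ X R hg a b d)
    (fun i m m' δ δ' a b d => Aux.volQ_mono μ _ R (hgi i) a b d)
    (fun m δ N => Aux.symQ_le μ X R N m δ) c (fun i m δ N => hc i N m δ)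
    (diffEntropy volume (Measure.map (fun ω (i : Fin n) => X i ω) μ))
    (fun i => diffEntropy volume (Measure.map (fun ω (_ : Fin 1) => X i ω) μ))
    hvol.1 hvol.2 (fun i => (hvoli i).1) (fun i => (hvoli i).2)
  unfold Isym IsymUpper
  simp only [neg_neg]
  refine ⟨h1, h2, fun h => ?_⟩
  congr 1
  have hb : (∑ i, diffEntropy volume (Measure.map (fun ω (_ : Fin 1) => X i ω) μ)) ≠ ⊥ := by
    rcases h with h | h
    · exact h.1
    · intro hbot
      rw [hbot, EReal.add_bot] at h1
      exact h h1
  generalize (∑ i, diffEntropy volume (Measure.map (fun ω (_ : Fin 1) => X i ω) μ)) = S at *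
  lift S to ℝ using ⟨h5, hb⟩
  have e := h1.symm.trans h2
  have e2 := congrArg (fun z : EReal => z - (S : EReal)) e
  simpa only [EReal.add_sub_cancel_right] using e2
end
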